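/- arXiv:1201.0484 — 3 statements merged into one kernel-verified Lean document; each statement's English description precedes it below -/
import Mathlib

section
/- Let q be a prime power with q ≡ 1 (mod 4), q odd, let C be an irreducible conic in PG(2,q), let L be an external line of C, and let S be the set of exterior points of C lying on L. Then there is exactly one point Q of PG(2,q) not lying on L such that S ∪ {Q} is an exterior set of C. -/
/-!
`PG(2,F)`: points are the 1-dimensional subspaces of `F^3` (modelled as the
projectivization of `Fin 3 → F`), lines are the 2-dimensional subspaces.
-/

variable {F : Type*} [Field F]

/-- The points of `PG(2,F)`: 1-dimensional subspaces of `F^3`. -/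
abbrev PGPoint (F : Type*) [Field F] := Projectivization F (Fin 3 → F)

/-- A line of `PG(2,F)` is a 2-dimensional subspace of `F^3`. -/
def IsProjLine (F : Type*) [Field F] (L : Submodule F (Fin 3 → F)) : Prop :=
  Module.finrank F L = 2

/-- The set of projective points lying on the subspace `L`. -/
def pointsOn (L : Submodule F (Fin 3 → F)) : Set (PGPoint F) :=
  {P | P.submodule ≤ L}

/-- `S` is a set without tangents: no line of `PG(2,F)` meets `S` in exactly one point. -/
def NoTangents (S : Set (PGPoint F)) : Prop :=
  ∀ L : Submodule F (Fin 3 → F), IsProjLine F L →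
    ¬ (∃! P : PGPoint F, P ∈ S ∩ pointsOn L)

/-- The conic (zero set in `PG(2,F)`) of a quadratic form `Q` on `F^3`. -/
def conicSet (Q : QuadraticForm F (Fin 3 → F)) : Set (PGPoint F) :=
  {P | ∀ v ∈ P.submodule, Q v = 0}

/-- Nondegeneracy of a quadratic form (via its polar form). -/
def NondegQF (Q : QuadraticForm F (Fin 3 → F)) : Prop :=
  ∀ v : Fin 3 → F, (∀ w, QuadraticMap.polar Q v w = 0) → v = 0

/-- A tangent line of a point set `C`: a line meeting `C` in exactly one point. -/
def IsTangentLine (C : Set (PGPoint F)) (L : Submodule F (Fin 3 → F)) : Prop :=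
  IsProjLine F L ∧ ∃! P : PGPoint F, P ∈ C ∩ pointsOn L

/-- An external line of a point set `C`: a line meeting `C` in no point. -/
def IsExternalLine (C : Set (PGPoint F)) (L : Submodule F (Fin 3 → F)) : Prop :=
  IsProjLine F L ∧ C ∩ pointsOn L = ∅

/-- An exterior point of `C`: a point not on `C` lying on some tangent line of `C`. -/
def IsExteriorPoint (C : Set (PGPoint F)) (P : PGPoint F) : Prop :=
  P ∉ C ∧ ∃ L : Submodule F (Fin 3 → F), IsTangentLine C L ∧ P ∈ pointsOn L

/-- An interior point of `C`: a point neither on `C` nor exterior to `C`. -/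
def IsInteriorPoint (C : Set (PGPoint F)) (P : PGPoint F) : Prop :=
  P ∉ C ∧ ¬ IsExteriorPoint C P

/-- An exterior set of `C`: every line containing at least two of its points is
an external line of `C`. -/
def IsExteriorSet (C E : Set (PGPoint F)) : Prop :=
  ∀ L : Submodule F (Fin 3 → F), IsProjLine F L →
    (∃ P1 ∈ E ∩ pointsOn L, ∃ P2 ∈ E ∩ pointsOn L, P1 ≠ P2) → IsExternalLine C L

theorem isSquare_mul_of_not_isSquare [Fintype F] {x y : F}
    (hx : ¬ IsSquare x) (hy : ¬ IsSquare y) : IsSquare (x * y) := by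
  have hF : ringChar F ≠ 2 := fun h => hx (FiniteField.isSquare_of_char_two h x)
  have hx0 : x ≠ 0 := by rintro rfl; exact hx (IsSquare.zero)
  have hy0 : y ≠ 0 := by rintro rfl; exact hy (IsSquare.zero)
  rw [FiniteField.isSquare_iff hF hx0] at hx
  rw [FiniteField.isSquare_iff hF hy0] at hy
  rw [FiniteField.isSquare_iff hF (mul_ne_zero hx0 hy0), mul_pow,
    (FiniteField.pow_dichotomy hF hx0).resolve_left hx,
    (FiniteField.pow_dichotomy hF hy0).resolve_left hy]
  ring

theorem not_isSquare_mul_of_isSquare {x y : F} (hx : IsSquare x) (hx0 : x ≠ 0)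
    (hy : ¬ IsSquare y) : ¬ IsSquare (x * y) := by
  intro h
  apply hy
  have := h.div hx
  rwa [mul_div_cancel_left₀ _ hx0] at this

/-- The power sum that detects a scaling of the nonsquares. -/
theorem sum_mul_one_sub_pow_mul_one_add_pow [Fintype F] {m : ℕ} (hm : 2 ≤ m)
    (hcard : Fintype.card F = 2 * m + 1) :
    ∑ x : F, x * (1 - x ^ m) * (1 + x) ^ m = m := by
  classical
  have hlow (i : ℕ) (hi : i < 2 * m) : ∑ x : F, x ^ i = 0 :=
    FiniteField.sum_pow_lt_card_sub_one F i (by omega)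
  have hq0 : (2 * m + 1 : F) = 0 := by
    have := FiniteField.cast_card_eq_zero F
    rw [hcard] at this
    exact_mod_cast this
  have htop : ∑ x : F, x ^ (2 * m) = -1 := by
    have h1 (x : F) : x ^ (2 * m) = 1 - if x = 0 then 1 else 0 := by
      split_ifs with h
      · subst h; rw [zero_pow (by omega)]; ring
      · have := FiniteField.pow_card_sub_one_eq_one x h
        rw [hcard] at this
        simpa using this
    simp only [h1, Finset.sum_sub_distrib, Finset.sum_ite_eq', Finset.mem_univ, if_true]
    simp
  have htop' : ∑ x : F, x ^ (2 * m + 1) = 0 := by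
    have h1 (x : F) : x ^ (2 * m + 1) = x ^ 1 := by
      rw [← hcard, FiniteField.pow_card, pow_one]
    simp only [h1]
    exact hlow 1 (by omega)
  have hexp (x : F) : x * (1 - x ^ m) * (1 + x) ^ m =
      ∑ i ∈ Finset.range (m + 1), (m.choose i : F) * (x ^ (i + 1) - x ^ (i + 1 + m)) := by
    rw [add_comm 1 x, add_pow, Finset.mul_sum]
    refine Finset.sum_congr rfl fun i _ => ?_
    rw [one_pow]; ring
  simp only [hexp]
  rw [Finset.sum_comm]
  simp only [← Finset.mul_sum, Finset.sum_sub_distrib]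
  rw [Finset.sum_eq_single (m - 1)]
  · rw [hlow _ (by omega), show m - 1 + 1 + m = 2 * m by omega, htop]
    obtain ⟨k, rfl⟩ : ∃ k, m = k + 1 := ⟨m - 1, by omega⟩
    simp
  · intro i hi hne
    rw [Finset.mem_range] at hi
    rw [hlow (i + 1) (by omega)]
    rcases (by omega : i + 1 + m < 2 * m ∨ i + 1 + m = 2 * m + 1) with h | h
    · rw [hlow _ h]; simp
    · rw [h, htop']; simp
  · intro h
    exact absurd (Finset.mem_range.2 (by omega)) h

/-- Scaling by a nonzero square `l ≠ 1` changes the quadratic character of some `1 + x` with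
`x` a nonsquare. -/
theorem eq_one_of_isSquare_one_add_mul_iff [Fintype F] (hq : Fintype.card F % 4 = 1)
    {l : F} (hl0 : l ≠ 0) (hl : IsSquare l)
    (h : ∀ x : F, ¬ IsSquare x → (IsSquare (1 + x) ↔ IsSquare (1 + l * x))) : l = 1 := by
  have hF : ringChar F ≠ 2 := fun h2 => by
    have := FiniteField.even_card_of_char_two h2
    omega
  have h1 := Fintype.one_lt_card (α := F)
  obtain ⟨m, hm, hcard⟩ : ∃ m, 2 ≤ m ∧ Fintype.card F = 2 * m + 1 :=
    ⟨Fintype.card F / 2, by omega, by omega⟩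
  have hm2 : Fintype.card F / 2 = m := by omega
  have hneg : IsSquare (-1 : F) := FiniteField.isSquare_neg_one_iff.2 (by omega)
  have hlm : l ^ m = 1 := by
    rw [← hm2]; exact (FiniteField.isSquare_iff hF hl0).1 hl
  have hchar {x y : F} (hx0 : x ≠ 0) (hy0 : y ≠ 0) (hxy : IsSquare x ↔ IsSquare y) :
      x ^ m = y ^ m := by
    rw [FiniteField.isSquare_iff hF hx0, FiniteField.isSquare_iff hF hy0, hm2] at hxy
    have dx := FiniteField.pow_dichotomy hF hx0
    have dy := FiniteField.pow_dichotomy hF hy0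
    rw [hm2] at dx dy
    rcases dx with dx | dx <;> rcases dy with dy | dy <;> simp_all
  have hne {x : F} (hx : ¬ IsSquare x) : 1 + x ≠ 0 := fun h0 => hx (by
    rwa [show x = -1 by linear_combination h0])
  have hterm (x : F) : x * (1 - x ^ m) * (1 + l * x) ^ m = x * (1 - x ^ m) * (1 + x) ^ m := by
    by_cases hx0 : x = 0
    · simp [hx0]
    by_cases hx : IsSquare x
    · rw [FiniteField.isSquare_iff hF hx0, hm2] at hx
      simp [hx]
    · rw [hchar (hne hx) (hne (not_isSquare_mul_of_isSquare hl hl0 hx)) (h x hx)]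
  have hsum := sum_mul_one_sub_pow_mul_one_add_pow hm hcard
  have hscale : l * ∑ x : F, x * (1 - x ^ m) * (1 + l * x) ^ m =
      ∑ x : F, x * (1 - x ^ m) * (1 + x) ^ m := by
    rw [Finset.mul_sum]
    refine Fintype.sum_equiv (Equiv.mulLeft₀ l hl0) _ _ fun x => ?_
    simp only [Equiv.mulLeft₀_apply]
    rw [mul_pow, hlm]; ring
  simp only [hterm, hsum] at hscale
  have hm0 : (m : F) ≠ 0 := by
    intro h0
    have := FiniteField.cast_card_eq_zero F
    rw [hcard] at this
    push_cast at this
    simp [h0] at this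
  exact mul_right_cancel₀ hm0 (by rw [hscale, one_mul])

theorem exists_not_isSquare_and_isSquare [Fintype F] (hq : Fintype.card F % 4 = 1)
    {a b c : F} (ha : a ≠ 0) (hc : c ≠ 0) (hab : ¬ IsSquare (a * b)) :
    ∃ s t : F, ¬ IsSquare (c * (a * s ^ 2 + b * t ^ 2)) ∧
      IsSquare (a * c * s ^ 2 + b * (a + c) * t ^ 2) := by
  by_contra! H
  have hneg : IsSquare (-1 : F) := FiniteField.isSquare_neg_one_iff.2 (by omega)
  have hb : b ≠ 0 := by rintro rfl; simp at hab
  set l : F := (a + c) / c with hl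
  have hac : a * c ≠ 0 := mul_ne_zero ha hc
  have H' (x : F) (hx : ¬ IsSquare x) (h1 : ¬ IsSquare (a * c * (1 + x))) :
      ¬ IsSquare (a * c * (1 + l * x)) := by
    obtain ⟨k, hk⟩ := isSquare_mul_of_not_isSquare hx hab
    have hkx : b * (k / b) ^ 2 = a * x := by field_simp; linear_combination -hk
    have := H 1 (k / b)
    rw [hkx] at this
    have e1 : c * (a * 1 ^ 2 + a * x) = a * c * (1 + x) := by ring
    have e2 : a * c * 1 ^ 2 + b * (a + c) * (k / b) ^ 2 = a * c * (1 + l * x) := by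
      rw [hl]
      field_simp
      field_simp at hkx
      linear_combination (a + c) * hkx
    rw [e1, e2] at this
    exact this h1
  have hl1 : l - 1 = a / c := by rw [hl]; field_simp; ring
  have hl_ne : l ≠ 1 := fun h => div_ne_zero ha hc (by rw [← hl1, h, sub_self])
  have hinv {x : F} (hx : ¬ IsSquare x) : ¬ IsSquare x⁻¹ := by rwa [isSquare_inv]
  have hl0sq : l ≠ 0 ∧ IsSquare l := by
    by_cases hε : IsSquare (a * c)
    · have hbc : ¬ IsSquare (b * c) := fun h => hab <| by
        have := (hε.mul h).div (IsSquare.sq c)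
        rwa [show a * c * (b * c) / c ^ 2 = a * b by field_simp] at this
      have h0 := H 0 1
      rw [show c * (a * 0 ^ 2 + b * 1 ^ 2) = b * c by ring,
        show a * c * 0 ^ 2 + b * (a + c) * 1 ^ 2 = b * c * l by rw [hl]; field_simp; ring] at h0
      have h1 := h0 hbc
      refine ⟨?_, ?_⟩
      · intro h; simp [h] at h1
      · by_contra h
        exact h1 (isSquare_mul_of_not_isSquare hbc h)
    · have hl0 : l ≠ 0 := by
        intro h
        have : a = -1 * c := by
          rw [h] at hl1; field_simp at hl1; linear_combination -hl1
        exact hε (by rw [this, mul_assoc]; exact hneg.mul (IsSquare.mul_self c))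
      refine ⟨hl0, ?_⟩
      by_contra hln
      have hx : ¬ IsSquare (-1 * l⁻¹) :=
        not_isSquare_mul_of_isSquare hneg (by simp) (hinv hln)
      refine H' _ hx ?_ (by rw [show 1 + l * (-1 * l⁻¹) = 0 by field_simp; ring]; simp)
      have : a * c * (1 + -1 * l⁻¹) = a ^ 2 * l⁻¹ := by
        have : a = (l - 1) * c := by rw [hl1]; field_simp
        rw [this]; field_simp; ring
      rw [this]
      exact not_isSquare_mul_of_isSquare (IsSquare.sq a) (pow_ne_zero 2 ha) (hinv hln)
  obtain ⟨hl0, hlsq⟩ := hl0sq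
  have hscale {x : F} (hx : ¬ IsSquare x) (n : ℕ) : ¬ IsSquare (l ^ n * x) :=
    not_isSquare_mul_of_isSquare (hlsq.pow n) (pow_ne_zero n hl0) hx
  have hiter (x : F) (hx : ¬ IsSquare x) (h1 : ¬ IsSquare (a * c * (1 + x))) (n : ℕ) :
      ¬ IsSquare (a * c * (1 + l ^ n * x)) := by
    induction n with
    | zero => simpa using h1
    | succ n ih =>
      rw [show l ^ (n + 1) * x = l * (l ^ n * x) by ring]
      exact H' _ (hscale hx n) ih
  have hiff (x : F) (hx : ¬ IsSquare x) :
      ¬ IsSquare (a * c * (1 + x)) ↔ ¬ IsSquare (a * c * (1 + l * x)) := by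
    refine ⟨H' x hx, fun h => ?_⟩
    have hx' : ¬ IsSquare (l * x) := by simpa using hscale hx 1
    have := hiter (l * x) hx' h (Fintype.card F - 2)
    have hp : l ^ (Fintype.card F - 2) * (l * x) = x := by
      have h1 := Fintype.one_lt_card (α := F)
      rw [← mul_assoc, ← pow_succ, show Fintype.card F - 2 + 1 = Fintype.card F - 1 by omega,
        FiniteField.pow_card_sub_one_eq_one l hl0, one_mul]
    rwa [hp] at this
  refine hl_ne (eq_one_of_isSquare_one_add_mul_iff hq hl0 hlsq fun x hx => ?_)
  have hne {x : F} (hx : ¬ IsSquare x) : 1 + x ≠ 0 := fun h0 => hx (by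
    rwa [show x = -1 by linear_combination h0])
  have key (hs : IsSquare (a * c)) {y : F} : IsSquare y ↔ IsSquare (a * c * y) :=
    ⟨hs.mul, fun h => by_contra fun hy => not_isSquare_mul_of_isSquare hs hac hy h⟩
  have key' {y : F} (hy0 : y ≠ 0) (hs : ¬ IsSquare (a * c)) :
      IsSquare y ↔ ¬ IsSquare (a * c * y) := by
    refine ⟨fun hy => ?_, fun h => by_contra fun hy => h (isSquare_mul_of_not_isSquare hs hy)⟩
    rw [mul_comm]
    exact not_isSquare_mul_of_isSquare hy hy0 hs
  by_cases hs : IsSquare (a * c)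
  · rw [key hs (y := 1 + x), key hs (y := 1 + l * x)]
    exact not_iff_not.1 (hiff x hx)
  · rw [key' (hne hx) hs, key' (hne (by simpa using hscale hx 1)) hs]
    exact hiff x hx

theorem mk_mem_pointsOn {v : Fin 3 → F} {hv : v ≠ 0} {L : Submodule F (Fin 3 → F)} :
    Projectivization.mk F v hv ∈ pointsOn L ↔ v ∈ L := by
  simp [pointsOn, Projectivization.submodule_mk]

theorem mk_mem_conicSet {v : Fin 3 → F} {hv : v ≠ 0} {Q : QuadraticForm F (Fin 3 → F)} :
    Projectivization.mk F v hv ∈ conicSet Q ↔ Q v = 0 := by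
  simp only [conicSet, Set.mem_ofPred_eq, Projectivization.submodule_mk]
  refine ⟨fun h => h v (Submodule.mem_span_singleton_self v), fun h w hw => ?_⟩
  obtain ⟨k, rfl⟩ := Submodule.mem_span_singleton.1 hw
  rw [QuadraticMap.map_smul, h, smul_zero]

theorem isExternalLine_iff {Q : QuadraticForm F (Fin 3 → F)} {L : Submodule F (Fin 3 → F)} :
    IsExternalLine (conicSet Q) L ↔ IsProjLine F L ∧ ∀ v ∈ L, Q v = 0 → v = 0 := by
  refine and_congr_right fun _ => ⟨fun h v hv hQ => by_contra fun h0 => ?_, fun h => ?_⟩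
  · have : Projectivization.mk F v h0 ∈ conicSet Q ∩ pointsOn L :=
      ⟨mk_mem_conicSet.2 hQ, mk_mem_pointsOn.2 hv⟩
    rw [h] at this
    exact this
  · rw [Set.eq_empty_iff_forall_notMem]
    intro P hP
    induction P using Projectivization.ind with
    | h v hv => exact hv (h v (mk_mem_pointsOn.1 hP.2) (mk_mem_conicSet.1 hP.1))

section Span

variable {V : Type*} [AddCommGroup V] [Module F V]

theorem finrank_span_pair {v w : V} (h : LinearIndependent F ![v, w]) :
    Module.finrank F (Submodule.span F {v, w}) = 2 := by
  have := finrank_span_eq_card h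
  rwa [Matrix.range_cons_cons_empty, Fintype.card_fin] at this

theorem span_pair_eq [FiniteDimensional F V] {v w : V} (h : LinearIndependent F ![v, w])
    {L : Submodule F V} (hL : Module.finrank F L = 2) (hv : v ∈ L) (hw : w ∈ L) :
    Submodule.span F {v, w} = L :=
  Submodule.eq_of_le_of_finrank_eq (Submodule.span_le.2 (by
    rintro x (rfl | rfl) <;> assumption)) (by rw [finrank_span_pair h, hL])

theorem QuadraticMap.map_smul_add_smul (Q : QuadraticForm F V) (s t : F) (v w : V) :
    Q (s • v + t • w) = s ^ 2 * Q v + t ^ 2 * Q w + s * t * QuadraticMap.polar Q v w := by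
  rw [QuadraticMap.map_add Q (s • v) (t • w), QuadraticMap.map_smul, QuadraticMap.map_smul,
    QuadraticMap.polar_smul_left, QuadraticMap.polar_smul_right]
  simp only [smul_eq_mul]; ring

theorem exists_ne_zero_polar_eq_zero (Q : QuadraticForm F V) {L : Submodule F V}
    (hL : Module.finrank F L = 2) (v : V) :
    ∃ r ∈ L, r ≠ 0 ∧ QuadraticMap.polar Q v r = 0 := by
  have : FiniteDimensional F L := FiniteDimensional.of_finrank_pos (by omega)
  have hker := LinearMap.ker_ne_bot_of_finrank_lt (f := (Q.polarBilin v).domRestrict L)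
    (by rw [hL, Module.finrank_self]; norm_num)
  obtain ⟨x, hx, hx0⟩ := Submodule.exists_mem_ne_zero_of_ne_bot hker
  exact ⟨x, x.2, by simpa using hx0, by simpa using hx⟩

theorem exists_ne_zero_forall_polar_eq_zero [FiniteDimensional F V] (Q : QuadraticForm F V)
    {L : Submodule F V} (hL : Module.finrank F L < Module.finrank F V) :
    ∃ e, e ≠ 0 ∧ ∀ v ∈ L, QuadraticMap.polar Q v e = 0 := by
  have hker := LinearMap.ker_ne_bot_of_finrank_lt
    (f := (Submodule.dualRestrict L).comp Q.polarBilin)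
    (by rwa [Subspace.dual_finrank_eq])
  obtain ⟨e, he, he0⟩ := Submodule.exists_mem_ne_zero_of_ne_bot hker
  refine ⟨e, he0, fun v hv => ?_⟩
  have := LinearMap.congr_fun (LinearMap.mem_ker.1 he) ⟨v, hv⟩
  rw [QuadraticMap.polar_comm]
  simpa using this

theorem linearIndependent_of_polar_eq_zero (h2 : (2 : F) ≠ 0) {Q : QuadraticForm F V} {v w : V}
    (hv : Q v ≠ 0) (hw : w ≠ 0) (h : QuadraticMap.polar Q v w = 0) :
    LinearIndependent F ![v, w] := by
  rw [LinearIndependent.pair_iff]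
  intro s t hst
  have := congrArg (QuadraticMap.polar Q v) hst
  simp only [QuadraticMap.polar_add_right, QuadraticMap.polar_smul_right, h,
    QuadraticMap.polar_self, QuadraticMap.polar_zero_right, smul_eq_mul, mul_zero, add_zero,
    nsmul_eq_mul, Nat.cast_ofNat] at this
  have hs : s = 0 := by simpa [h2, hv] using this
  subst hs
  simpa [hw] using hst

end Span

theorem exists_isTangentLine_iff (h2 : (2 : F) ≠ 0) {Q : QuadraticForm F (Fin 3 → F)}
    {p : Fin 3 → F} (hp : Q p ≠ 0) :
    (∃ T : Submodule F (Fin 3 → F), IsTangentLine (conicSet Q) T ∧ p ∈ T) ↔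
      ∃ w, w ≠ 0 ∧ Q w = 0 ∧ QuadraticMap.polar Q p w = 0 := by
  constructor
  · rintro ⟨T, ⟨-, P, hP, huniq⟩, hpT⟩
    induction P using Projectivization.ind with
    | h w hw =>
      have hQw := mk_mem_conicSet.1 hP.1
      have hwT := mk_mem_pointsOn.1 hP.2
      refine ⟨w, hw, hQw, ?_⟩
      by_contra hB
      set B := QuadraticMap.polar Q p w with hBdef
      have hw' : (-B) • p + Q p • w ≠ 0 := by
        intro h
        have h' : B • p = Q p • w := by
          rw [neg_smul, neg_add_eq_zero] at h; exact h
        have := congrArg Q h'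
        rw [QuadraticMap.map_smul, QuadraticMap.map_smul, hQw] at this
        simp [hB, hp] at this
      have := huniq (Projectivization.mk F _ hw') ⟨mk_mem_conicSet.2 (by
        rw [QuadraticMap.map_smul_add_smul, hQw, ← hBdef]; ring), mk_mem_pointsOn.2
          (T.add_mem (T.smul_mem _ hpT) (T.smul_mem _ hwT))⟩
      obtain ⟨k, hk⟩ := (Projectivization.mk_eq_mk_iff' F _ _ hw' hw).1 this
      have h' : B • p = (Q p - k) • w := by
        rw [sub_smul, hk]; module
      have := congrArg Q h'
      rw [QuadraticMap.map_smul, QuadraticMap.map_smul, hQw] at this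
      simp [hB, hp] at this
  · rintro ⟨w, hw, hQw, hB⟩
    refine ⟨Submodule.span F {p, w},
      ⟨finrank_span_pair (linearIndependent_of_polar_eq_zero h2 hp hw hB),
        Projectivization.mk F w hw, ⟨mk_mem_conicSet.2 hQw,
          mk_mem_pointsOn.2 (Submodule.subset_span (by simp))⟩, ?_⟩,
        Submodule.subset_span (by simp)⟩
    intro P hP
    induction P using Projectivization.ind with
    | h v hv =>
      obtain ⟨s, t, rfl⟩ := Submodule.mem_span_pair.1 (mk_mem_pointsOn.1 hP.2)
      have h0 := mk_mem_conicSet.1 hP.1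
      rw [QuadraticMap.map_smul_add_smul, hQw, hB] at h0
      have hs : s = 0 := by simpa [hp] using h0
      exact (Projectivization.mk_eq_mk_iff' F _ _ hv hw).2 ⟨t, by simp [hs]⟩

theorem isExteriorPoint_mk_iff (h2 : (2 : F) ≠ 0) {Q : QuadraticForm F (Fin 3 → F)}
    {p : Fin 3 → F} (hp0 : p ≠ 0) (hp : Q p ≠ 0) :
    IsExteriorPoint (conicSet Q) (Projectivization.mk F p hp0) ↔
      ∃ w, w ≠ 0 ∧ Q w = 0 ∧ QuadraticMap.polar Q p w = 0 := by
  simp only [IsExteriorPoint, mk_mem_conicSet, mk_mem_pointsOn, hp, not_false_eq_true, true_and]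
  exact exists_isTangentLine_iff h2 hp

section Anisotropic

variable {V : Type*} [AddCommGroup V] [Module F V] {Q : QuadraticForm F V} {L : Submodule F V}

theorem not_isSquare_mul_of_anisotropic (h2 : (2 : F) ≠ 0) (hneg : IsSquare (-1 : F))
    (hL : ∀ v ∈ L, Q v = 0 → v = 0) {p r : V}
    (hp : p ∈ L) (hr : r ∈ L) (hp0 : p ≠ 0) (hr0 : r ≠ 0)
    (h : QuadraticMap.polar Q p r = 0) : ¬ IsSquare (Q p * Q r) := by
  rintro hsq
  obtain ⟨k, hk⟩ := hneg.mul hsq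
  have hQp : Q p ≠ 0 := fun h => hp0 (hL p hp h)
  have hind := linearIndependent_of_polar_eq_zero h2 hQp hr0 h
  have := hL (k • p + Q p • r) (L.add_mem (L.smul_mem _ hp) (L.smul_mem _ hr)) (by
    rw [QuadraticMap.map_smul_add_smul, h]; linear_combination -Q p * hk)
  exact hQp (LinearIndependent.pair_iff.1 hind _ _ this).2

theorem exists_eq_smul_add_smul_of_finrank_eq_two [FiniteDimensional F V] (h2 : (2 : F) ≠ 0)
    (hdim : Module.finrank F V = 3) (hrank : Module.finrank F L = 2)
    (hL : ∀ v ∈ L, Q v = 0 → v = 0) {e : V} (he0 : e ≠ 0)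
    (he : ∀ v ∈ L, QuadraticMap.polar Q v e = 0) (v : V) :
    ∃ u ∈ L, ∃ z : F, v = u + z • e := by
  have heL : e ∉ L := fun heL => he0 (hL e heL (by
    have := he e heL
    rw [QuadraticMap.polar_self, nsmul_eq_mul] at this
    simpa [h2] using this))
  have hlt : L < L ⊔ Submodule.span F {e} := by
    rw [left_lt_sup]; simpa using heL
  have htop : L ⊔ Submodule.span F {e} = ⊤ :=
    Submodule.eq_top_of_finrank_eq (le_antisymm (Submodule.finrank_le _) (by
      have := Submodule.finrank_lt_finrank_of_lt hlt
      omega))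
  obtain ⟨u, hu, y, hy, rfl⟩ := Submodule.mem_sup.1 (htop ▸ Submodule.mem_top : v ∈ _)
  obtain ⟨z, rfl⟩ := Submodule.mem_span_singleton.1 hy
  exact ⟨u, hu, z, rfl⟩

theorem exists_isotropic_polar_eq_zero_iff [Fintype F] [FiniteDimensional F V]
    (h2 : (2 : F) ≠ 0) (hneg : IsSquare (-1 : F))
    (hdim : Module.finrank F V = 3) (hrank : Module.finrank F L = 2)
    (hL : ∀ v ∈ L, Q v = 0 → v = 0) {e : V} (he0 : e ≠ 0) (hQe : Q e ≠ 0)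
    (he : ∀ v ∈ L, QuadraticMap.polar Q v e = 0) {p : V} (hp : p ∈ L) (hp0 : p ≠ 0) :
    (∃ w, w ≠ 0 ∧ Q w = 0 ∧ QuadraticMap.polar Q p w = 0) ↔ ¬ IsSquare (Q e * Q p) := by
  have hQp : Q p ≠ 0 := fun h => hp0 (hL p hp h)
  obtain ⟨r, hr, hr0, hpr⟩ := exists_ne_zero_polar_eq_zero Q hrank p
  have hQr : Q r ≠ 0 := fun h => hr0 (hL r hr h)
  have hns := not_isSquare_mul_of_anisotropic h2 hneg hL hp hr hp0 hr0 hpr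
  have hspan := span_pair_eq (linearIndependent_of_polar_eq_zero h2 hQp hr0 hpr) hrank hp hr
  constructor
  · rintro ⟨w, hw0, hQw, hpw⟩ hsq
    obtain ⟨u, hu, z, rfl⟩ :=
      exists_eq_smul_add_smul_of_finrank_eq_two h2 hdim hrank hL he0 he w
    rw [← hspan] at hu
    obtain ⟨s, t, rfl⟩ := Submodule.mem_span_pair.1 hu
    simp only [QuadraticMap.polar_add_right, QuadraticMap.polar_smul_right, hpr, he p hp,
      QuadraticMap.polar_self, smul_eq_mul, mul_zero, add_zero, nsmul_eq_mul,
      Nat.cast_ofNat] at hpw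
    have hs : s = 0 := by simpa [h2, hQp] using hpw
    subst hs
    rw [zero_smul, zero_add, QuadraticMap.map_smul_add_smul, he r hr] at hQw
    obtain ⟨k, hk⟩ := hsq
    have ht : t ≠ 0 := by
      rintro rfl
      have hz : z = 0 := by simpa [hQe] using hQw
      simp [hz] at hw0
    obtain ⟨i, hi⟩ := hneg
    refine hns ⟨i * z * k / t, ?_⟩
    field_simp
    linear_combination Q p * hQw + z ^ 2 * k ^ 2 * hi - z ^ 2 * hk
  · intro hsq
    have her : IsSquare (Q e * Q r) := by
      have := (isSquare_mul_of_not_isSquare hsq hns).div (IsSquare.sq (Q p))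
      rwa [show Q e * Q p * (Q p * Q r) / Q p ^ 2 = Q e * Q r by field_simp] at this
    obtain ⟨k, hk⟩ := her
    obtain ⟨i, hi⟩ := hneg
    have hi0 : i ≠ 0 := by rintro rfl; simp at hi
    have hind := linearIndependent_of_polar_eq_zero h2 hQr he0 (he r hr)
    refine ⟨(Q e * i) • r + k • e, fun h => ?_, ?_, ?_⟩
    · exact mul_ne_zero hQe hi0 (LinearIndependent.pair_iff.1 hind _ _ h).1
    · rw [QuadraticMap.map_smul_add_smul, he r hr]
      linear_combination -Q e ^ 2 * Q r * hi - Q e * hk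
    · simp [QuadraticMap.polar_add_right, QuadraticMap.polar_smul_right, hpr, he p hp]

theorem anisotropic_span_pair (hneg : IsSquare (-1 : F)) {p e : V}
    (he : QuadraticMap.polar Q p e = 0) (h : ¬ IsSquare (Q e * Q p)) :
    ∀ v ∈ Submodule.span F {p, e}, Q v = 0 → v = 0 := by
  intro v hv hQv
  obtain ⟨s, t, rfl⟩ := Submodule.mem_span_pair.1 hv
  rw [QuadraticMap.map_smul_add_smul, he] at hQv
  obtain ⟨i, hi⟩ := hneg
  have hQe : Q e ≠ 0 := fun h0 => h (by simp [h0])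
  have hs : s = 0 := by
    by_contra hs
    refine h ⟨i * t * Q e / s, ?_⟩
    field_simp
    linear_combination hQv + t ^ 2 * Q e * hi
  subst hs
  have ht : t = 0 := by simpa [hQe] using hQv
  simp [ht]

theorem not_isSquare_discrim_of_anisotropic_span_pair {p v : V}
    (h2 : (2 : F) ≠ 0) (hind : LinearIndependent F ![p, v])
    (h : ∀ x ∈ Submodule.span F {p, v}, Q x = 0 → x = 0) :
    ¬ IsSquare (QuadraticMap.polar Q p v ^ 2 - 4 * Q p * Q v) := by
  rintro ⟨k, hk⟩
  have := h ((k - QuadraticMap.polar Q p v) • p + (2 * Q p) • v)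
    (Submodule.mem_span_pair.2 ⟨_, _, rfl⟩) (by
      rw [QuadraticMap.map_smul_add_smul]; linear_combination -Q p * hk)
  have hQp := (LinearIndependent.pair_iff.1 hind _ _ this).2
  have hp := h p (Submodule.subset_span (by simp)) (by simpa [h2] using hQp)
  exact one_ne_zero (LinearIndependent.pair_iff.1 hind 1 0 (by simp [hp])).1

end Anisotropic

/-- `q ≡ 1 (mod 4)`, `q` odd; there is a unique point `Q₀` off an
external line `L` of an irreducible conic `C` such that the exterior points of
`C` on `L` together with `Q₀` form an exterior set of `C`. -/
theorem stmt_13 [Fintype F] (hq : Fintype.card F % 4 = 1) (hodd : Odd (Fintype.card F))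
    (Q : QuadraticForm F (Fin 3 → F)) (hQ : NondegQF Q)
    (L : Submodule F (Fin 3 → F)) (hL : IsExternalLine (conicSet Q) L) :
    ∃! Q0 : PGPoint F, Q0 ∉ pointsOn L ∧
      IsExteriorSet (conicSet Q)
        ({P ∈ pointsOn L | IsExteriorPoint (conicSet Q) P} ∪ {Q0}) := by
  have h2 : (2 : F) ≠ 0 := Ring.two_ne_zero fun h => by
    have := FiniteField.even_card_of_char_two h
    omega
  have hneg : IsSquare (-1 : F) := FiniteField.isSquare_neg_one_iff.2 (by omega)
  have hdim : Module.finrank F (Fin 3 → F) = 3 := by simp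
  obtain ⟨hrank, haniso⟩ := isExternalLine_iff.1 hL
  have hrank' : Module.finrank F L = 2 := hrank
  obtain ⟨e, he0, he⟩ := exists_ne_zero_forall_polar_eq_zero Q (L := L) (by omega)
  have hdecomp := exists_eq_smul_add_smul_of_finrank_eq_two h2 hdim hrank haniso he0 he
  have hQe : Q e ≠ 0 := fun h0 => he0 <| hQ e fun w => by
    obtain ⟨u, hu, z, rfl⟩ := hdecomp w
    rw [QuadraticMap.polar_comm, QuadraticMap.polar_add_left, QuadraticMap.polar_smul_left,
      he u hu, QuadraticMap.polar_self, h0]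
    simp
  have heL : e ∉ L := fun h => hQe (by
    have := he e h
    rw [QuadraticMap.polar_self, nsmul_eq_mul] at this
    simpa [h2] using this)
  have hext {p : Fin 3 → F} (hp : p ∈ L) (hp0 : p ≠ 0) :
      IsExteriorPoint (conicSet Q) (Projectivization.mk F p hp0) ↔ ¬ IsSquare (Q e * Q p) :=
    (isExteriorPoint_mk_iff h2 hp0 fun h => hp0 (haniso p hp h)).trans
      (exists_isotropic_polar_eq_zero_iff h2 hneg hdim hrank haniso he0 hQe he hp hp0)
  have hind {p v : Fin 3 → F} (hp : p ∈ L) (hp0 : p ≠ 0) (hv : v ∉ L) :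
      LinearIndependent F ![p, v] := by
    rw [LinearIndependent.pair_iff' hp0]
    rintro k rfl
    exact hv (L.smul_mem k hp)
  have hspan_external {p : Fin 3 → F} (hp : p ∈ L) (hp0 : p ≠ 0)
      (hpe : IsExteriorPoint (conicSet Q) (Projectivization.mk F p hp0))
      {M : Submodule F (Fin 3 → F)} (hM : IsProjLine F M) (hpM : p ∈ M) (heM : e ∈ M) :
      IsExternalLine (conicSet Q) M := by
    refine isExternalLine_iff.2 ⟨hM, ?_⟩
    rw [← span_pair_eq (hind hp hp0 heL) hM hpM heM]
    exact anisotropic_span_pair hneg (he p hp) ((hext hp hp0).1 hpe)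
  refine ⟨Projectivization.mk F e he0, ⟨fun h => heL (mk_mem_pointsOn.1 h), ?_⟩, ?_⟩
  · rintro M hM ⟨P₁, ⟨h1, h1M⟩, P₂, ⟨h2, h2M⟩, hne⟩
    induction P₁ using Projectivization.ind with
    | h p₁ hp₁ =>
    induction P₂ using Projectivization.ind with
    | h p₂ hp₂ =>
    rcases h1 with ⟨h1L, h1e⟩ | h1 <;> rcases h2 with ⟨h2L, h2e⟩ | h2
    · rw [mk_mem_pointsOn] at h1L h2L h1M h2M
      have hlin : LinearIndependent F ![p₁, p₂] := by
        rw [LinearIndependent.pair_iff' hp₁]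
        intro k hk
        exact hne ((Projectivization.mk_eq_mk_iff' F _ _ hp₂ hp₁).2 ⟨k, hk⟩).symm
      rwa [← span_pair_eq hlin hM h1M h2M, span_pair_eq hlin hrank h1L h2L]
    · rw [Set.mem_singleton_iff] at h2
      rw [h2] at h2M
      rw [mk_mem_pointsOn] at h1L h1M h2M
      exact hspan_external h1L hp₁ h1e hM h1M h2M
    · rw [Set.mem_singleton_iff] at h1
      rw [h1] at h1M
      rw [mk_mem_pointsOn] at h2L h1M h2M
      exact hspan_external h2L hp₂ h2e hM h2M h1M
    · exact absurd (h1.trans h2.symm) hne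
  · rintro P ⟨hPL, hP⟩
    induction P using Projectivization.ind with
    | h v hv =>
    rw [mk_mem_pointsOn] at hPL
    obtain ⟨w, hw, z, rfl⟩ := hdecomp v
    have hz : z ≠ 0 := by
      rintro rfl
      exact hPL (by simpa using hw)
    by_cases hw0 : w = 0
    · exact (Projectivization.mk_eq_mk_iff' F _ _ hv he0).2 ⟨z, by simp [hw0]⟩
    exfalso
    obtain ⟨r, hr, hr0, hwr⟩ := exists_ne_zero_polar_eq_zero Q hrank w
    have hQw : Q w ≠ 0 := fun h => hw0 (haniso w hw h)
    obtain ⟨s, t, hst, hsq⟩ := exists_not_isSquare_and_isSquare hq hQw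
      (mul_ne_zero (pow_ne_zero 2 hz) hQe)
      (not_isSquare_mul_of_anisotropic h2 hneg haniso hw hr hw0 hr0 hwr)
    set p := s • w + t • r with hpdef
    have hp : p ∈ L := L.add_mem (L.smul_mem _ hw) (L.smul_mem _ hr)
    have hQp : Q p = Q w * s ^ 2 + Q r * t ^ 2 := by
      rw [hpdef, QuadraticMap.map_smul_add_smul, hwr]; ring
    have hQv : Q (w + z • e) = Q w + z ^ 2 * Q e := by
      have := QuadraticMap.map_smul_add_smul Q 1 z w e
      rw [one_smul, he w hw] at this
      rw [this]; ring
    have hpv : QuadraticMap.polar Q p (w + z • e) = 2 * s * Q w := by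
      rw [QuadraticMap.polar_add_right, QuadraticMap.polar_smul_right, he p hp, hpdef,
        QuadraticMap.polar_add_left, QuadraticMap.polar_smul_left, QuadraticMap.polar_smul_left,
        QuadraticMap.polar_comm Q r w, hwr, QuadraticMap.polar_self]
      simp only [smul_eq_mul, nsmul_eq_mul]; push_cast; ring
    have hp0 : p ≠ 0 := by
      intro h0
      rw [← hQp, h0] at hst
      simp at hst
    have hpe : IsExteriorPoint (conicSet Q) (Projectivization.mk F p hp0) := by
      rw [hext hp hp0]
      intro h
      apply hst
      rw [← hQp, mul_assoc]
      exact (IsSquare.sq z).mul h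
    have hlin := hind hp hp0 hPL
    have hline := hP (Submodule.span F {p, w + z • e}) (finrank_span_pair hlin)
      ⟨_, ⟨Or.inl ⟨mk_mem_pointsOn.2 hp, hpe⟩, mk_mem_pointsOn.2 (Submodule.subset_span (by simp))⟩,
        _, ⟨Or.inr rfl, mk_mem_pointsOn.2 (Submodule.subset_span (by simp))⟩, fun h => by
          have : Projectivization.mk F p hp0 ∈ pointsOn L := mk_mem_pointsOn.2 hp
          rw [h] at this
          exact hPL (mk_mem_pointsOn.1 this)⟩
    refine not_isSquare_discrim_of_anisotropic_span_pair h2 hlin (isExternalLine_iff.1 hline).2 ?_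
    have hdisc : QuadraticMap.polar Q p (w + z • e) ^ 2 - 4 * Q p * Q (w + z • e) =
        -1 * 2 ^ 2 * (Q w * (z ^ 2 * Q e) * s ^ 2 + Q r * (Q w + z ^ 2 * Q e) * t ^ 2) := by
      rw [hpv, hQp, hQv]; ring
    rw [hdisc]
    exact (hneg.mul (IsSquare.sq (2 : F))).mul hsq
end

section
/- Let q = p^h with p an odd prime and h ≥ 2, and let Tr : F_q → F_p denote the trace map. Let A be the set of points {⟨(1,x,Tr(x))⟩ : x ∈ F_q} of PG(2,q), and let N be the set of points on the line X = 0 that are not of the form ⟨(0,x,Tr(x))⟩ for any nonzero x ∈ F_q. Then A ∪ N is a set without tangents in PG(2,q) of size 2q − q/p. -/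
/-!
`PG(2,F)`: points are the 1-dimensional subspaces of `F^3` (modelled as the
projectivization of `Fin 3 → F`), lines are the 2-dimensional subspaces.
-/

variable {F : Type*} [Field F]

/-- The line of `PG(2,F)` with equation `X = 0`. -/
def lineX0 (F : Type*) [Field F] : Submodule F (Fin 3 → F) :=
  LinearMap.ker (LinearMap.proj 0 : (Fin 3 → F) →ₗ[F] F)

/-- The trace map `Tr : F_{p^h} → F_p`, `Tr(x) = x + x^p + ⋯ + x^{p^{h-1}}`
(viewed with values in `F`). -/
def trMap (F : Type*) [Field F] (p h : ℕ) : F → F :=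
  fun x => ∑ i ∈ Finset.range h, x ^ p ^ i

/-- The affine point `⟨(1, x, t)⟩`. -/
def affinePoint (x t : F) : PGPoint F :=
  Projectivization.mk F ![1, x, t] fun e => one_ne_zero (congrFun e 0)

/-- The point `⟨(0, y, 1)⟩` of the line `X = 0`. -/
def infinitePoint (y : F) : PGPoint F :=
  Projectivization.mk F ![0, y, 1] fun e => one_ne_zero (congrFun e 2)

lemma affinePoint_submodule (x t : F) :
    (affinePoint x t).submodule = Submodule.span F {![1, x, t]} :=
  Projectivization.submodule_mk _ _

lemma infinitePoint_submodule (y : F) :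
    (infinitePoint y).submodule = Submodule.span F {![0, y, 1]} :=
  Projectivization.submodule_mk _ _

lemma affinePoint_inj {x t x' t' : F} :
    affinePoint x t = affinePoint x' t' ↔ x = x' ∧ t = t' := by
  constructor
  · intro e
    obtain ⟨c, hc⟩ := (Projectivization.mk_eq_mk_iff' F _ _ _ _).1 e
    have h0 := congrFun hc 0
    have h1 := congrFun hc 1
    have h2 := congrFun hc 2
    simp at h0 h1 h2
    subst h0
    simp_all
  · rintro ⟨rfl, rfl⟩
    rfl

lemma infinitePoint_injective : Function.Injective (infinitePoint : F → PGPoint F) := by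
  intro y y' e
  obtain ⟨c, hc⟩ := (Projectivization.mk_eq_mk_iff' F _ _ _ _).1 e
  have h1 := congrFun hc 1
  have h2 := congrFun hc 2
  simp at h1 h2
  subst h2
  simp_all

lemma affinePoint_ne_infinitePoint (x t y : F) : affinePoint x t ≠ infinitePoint y := by
  intro e
  obtain ⟨c, hc⟩ := (Projectivization.mk_eq_mk_iff' F _ _ _ _).1 e
  simpa using congrFun hc 0

lemma exists_equation_of_isProjLine {L : Submodule F (Fin 3 → F)} (hL : IsProjLine F L) :
    ∃ a b c : F, ∀ v, v ∈ L ↔ a * v 0 + b * v 1 + c * v 2 = 0 := by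
  have hL2 : Module.finrank F L = 2 := hL
  have hlt : L < ⊤ := by
    rw [lt_top_iff_ne_top]
    rintro rfl
    simp at hL2
  obtain ⟨f, hf, hle⟩ := Submodule.exists_le_ker_of_lt_top L hlt
  have hker : L = LinearMap.ker f := by
    refine Submodule.eq_of_le_of_finrank_le hle ?_
    have := Submodule.finrank_lt (s := LinearMap.ker f) fun e => hf (LinearMap.ker_eq_top.1 e)
    simp only [Module.finrank_fin_fun] at this
    omega
  refine ⟨f (Pi.single 0 1), f (Pi.single 1 1), f (Pi.single 2 1), fun v => ?_⟩
  rw [hker, LinearMap.mem_ker, LinearMap.pi_apply_eq_sum_univ f v, Fin.sum_univ_three]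
  have hs (i : Fin 3) : (fun j => if i = j then (1 : F) else 0) = Pi.single i 1 := by
    ext j
    simp [Pi.single_apply, eq_comm]
  simp only [hs, smul_eq_mul, mul_comm]

/-- The properties of the trace `F_q → F_p`, viewed with values in `F_q`, that the construction
rests on: it is additive, linear over its own values, and not injective. -/
structure IsTraceLike (T : F → F) : Prop where
  map_add : ∀ x y, T (x + y) = T x + T y
  map_mul_map : ∀ x y, T (x * T y) = T x * T y
  exists_map_eq_zero : ∃ k, k ≠ 0 ∧ T k = 0

lemma IsTraceLike.map_zero {T : F → F} (hT : IsTraceLike T) : T 0 = 0 := by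
  simpa using hT.map_add 0 0

/-- The points of `X = 0` that are not directions `⟨(0, x, T x)⟩` are the points `⟨(0, y, 1)⟩`
with `T y ≠ 1`. -/
lemma IsTraceLike.nondirections_eq {T : F → F} (hT : IsTraceLike T) :
    pointsOn (lineX0 F) \ {P : PGPoint F | ∃ x : F, x ≠ 0 ∧
      P.submodule = Submodule.span F {![0, x, T x]}} = infinitePoint '' {y | T y ≠ 1} := by
  ext P
  constructor
  · rintro ⟨hP, hPD⟩
    induction P using Projectivization.ind with
    | h v hv =>
    have h0 : v 0 = 0 := by
      simpa [pointsOn, lineX0, Projectivization.submodule_mk] using hP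
    have h2 : v 2 ≠ 0 := by
      intro h2
      obtain ⟨k, hk, hTk⟩ := hT.exists_map_eq_zero
      have h1 : v 1 ≠ 0 := by
        intro h1
        apply hv
        ext i
        fin_cases i <;> simp [h0, h1, h2]
      refine hPD ⟨k, hk, ?_⟩
      rw [← Projectivization.submodule_mk ![0, k, T k] (fun e => hk (congrFun e 1))]
      congr 1
      rw [Projectivization.mk_eq_mk_iff']
      refine ⟨v 1 / k, ?_⟩
      ext i
      fin_cases i <;> simp [h0, h2, hTk, hk]
    have hPy : Projectivization.mk F v hv = infinitePoint (v 1 / v 2) := by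
      rw [infinitePoint, Projectivization.mk_eq_mk_iff']
      refine ⟨v 2, ?_⟩
      ext i
      fin_cases i <;> simp [h0]
      field_simp
    refine ⟨v 1 / v 2, fun hy => hPD ⟨v 1 / v 2, ?_, ?_⟩, hPy.symm⟩
    · intro h
      simp [h, hT.map_zero] at hy
    · rw [hy, hPy, infinitePoint_submodule]
  · rintro ⟨y, hy, rfl⟩
    refine ⟨?_, ?_⟩
    · simp [pointsOn, lineX0, infinitePoint_submodule]
    · rintro ⟨x, hx, e⟩
      rw [infinitePoint_submodule] at e
      have hmem : ![0, x, T x] ∈ Submodule.span F {![0, y, 1]} :=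
        e ▸ Submodule.mem_span_singleton_self _
      obtain ⟨c, hc⟩ := Submodule.mem_span_singleton.1 hmem
      have h1 : c * y = x := by simpa using congrFun hc 1
      have h2 : c = T x := by simpa using congrFun hc 2
      have hc0 : T x ≠ 0 := by
        intro h
        apply hx
        rw [← h1, h2, h, zero_mul]
      have h3 := hT.map_mul_map y x
      rw [← h2, mul_comm y, h1, h2] at h3
      exact hy (mul_right_cancel₀ hc0 (by rw [← h3, one_mul]))

lemma affine_eq_range (T : F → F) :
    {P : PGPoint F | ∃ x : F, P.submodule = Submodule.span F {![1, x, T x]}} =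
      Set.range fun x => affinePoint x (T x) := by
  ext P
  simp only [Set.mem_ofPred_eq, Set.mem_range, ← affinePoint_submodule,
    (Projectivization.submodule_injective).eq_iff, eq_comm]

lemma IsTraceLike.noTangents [Finite F] {T : F → F} (hT : IsTraceLike T) :
    NoTangents ((Set.range fun x => affinePoint x (T x)) ∪ infinitePoint '' {y | T y ≠ 1}) := by
  rintro L hL ⟨P, ⟨hPS, hPL⟩, huniq⟩
  obtain ⟨a, b, c, habc⟩ := exists_equation_of_isProjLine hL
  have hA (x : F) : affinePoint x (T x) ∈ pointsOn L ↔ a + b * x + c * T x = 0 := by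
    simp [pointsOn, affinePoint_submodule, habc]
  have hN (y : F) : infinitePoint y ∈ pointsOn L ↔ b * y + c = 0 := by
    simp [pointsOn, infinitePoint_submodule, habc]
  have eqA {x : F} (hx : a + b * x + c * T x = 0) : affinePoint x (T x) = P :=
    huniq _ ⟨Or.inl ⟨x, rfl⟩, (hA x).2 hx⟩
  have eqN {y : F} (hy : T y ≠ 1) (h : b * y + c = 0) : infinitePoint y = P :=
    huniq _ ⟨Or.inr ⟨y, hy, rfl⟩, (hN y).2 h⟩
  obtain ⟨k, hk, hTk⟩ := hT.exists_map_eq_zero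
  by_cases hbc : b = 0 ∧ c = 0
  · obtain ⟨rfl, rfl⟩ := hbc
    refine hk (infinitePoint_injective ((eqN ?_ ?_).trans (eqN ?_ ?_).symm)) <;>
      simp [hTk, hT.map_zero]
  by_cases hinj : ∀ x, b * x + c * T x = 0 → x = 0
  · have hb : b ≠ 0 := by
      rintro rfl
      exact hk (hinj k (by simp [hTk]))
    let g : F →+ F := AddMonoidHom.mk' (fun x => b * x + c * T x)
      (fun x y => by rw [hT.map_add]; ring)
    have hg : Function.Injective g := (injective_iff_map_eq_zero g).2 hinj
    obtain ⟨x, hx⟩ := Finite.surjective_of_injective hg (-a)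
    have hx' : b * x + c * T x = -a := hx
    have hby : b * (-c / b) + c = 0 := by field_simp; ring
    refine affinePoint_ne_infinitePoint _ _ _
      ((eqA (x := x) (by linear_combination hx')).trans (eqN (y := -c / b) ?_ hby).symm)
    intro hy
    have h0 := hinj (-c / b) (by rw [hy, mul_one, hby])
    simp [h0, hT.map_zero] at hy
  · push Not at hinj
    obtain ⟨z, hz, hz0⟩ := hinj
    rcases hPS with ⟨x, rfl⟩ | ⟨y, hy, rfl⟩
    · have hx := (hA x).1 hPL
      have := (affinePoint_inj.1 (eqA (x := x + z)
        (by rw [hT.map_add]; linear_combination hx + hz))).1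
      exact hz0 (by simpa using this)
    · have hy' := (hN y).1 hPL
      have hb : b ≠ 0 := by
        rintro rfl
        exact hbc ⟨rfl, by simpa using hy'⟩
      have hzy : z = y * T z :=
        mul_left_cancel₀ hb (by linear_combination hz - T z * hy')
      have hTz : T z ≠ 0 := by
        intro h
        rw [h, mul_zero] at hzy
        exact hz0 hzy
      have h3 := hT.map_mul_map y z
      rw [← hzy] at h3
      exact hy (mul_right_cancel₀ hTz (by rw [← h3, one_mul]))

lemma ncard_affine_union_infinite [Finite F] (T : F → F) :
    ((Set.range fun x => affinePoint x (T x)) ∪ infinitePoint '' {y | T y ≠ 1}).ncard =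
      Nat.card F + (Nat.card F - {y | T y = 1}.ncard) := by
  rw [Set.ncard_union_eq]
  · congr 1
    · rw [← Set.image_univ, Set.ncard_image_of_injective _
        (fun x y e => (affinePoint_inj.1 e).1), Set.ncard_univ]
    · rw [Set.ncard_image_of_injective _ infinitePoint_injective, ← Set.ncard_compl]
      rfl
  · rw [Set.disjoint_left]
    rintro _ ⟨x, rfl⟩ ⟨y, -, e⟩
    exact affinePoint_ne_infinitePoint _ _ _ e.symm

lemma trMap_eq_trace [Fintype F] {p h : ℕ} [Fact p.Prime] [Algebra (ZMod p) F]
    (hcard : Fintype.card F = p ^ h) (x : F) :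
    trMap F p h x = algebraMap (ZMod p) F (Algebra.trace (ZMod p) F x) := by
  have hfin : Module.finrank (ZMod p) F = h := by
    have := Module.card_eq_pow_finrank (K := ZMod p) (V := F)
    rw [hcard, ZMod.card] at this
    exact (Nat.pow_right_injective (Fact.out : p.Prime).two_le this).symm
  rw [FiniteField.algebraMap_trace_eq_sum_pow, hfin, Nat.card_zmod, trMap]

/-- All fibres of a surjective additive map between finite groups have the same size. -/
lemma ncard_fiber_mul_card {V W : Type*} [AddGroup V] [AddGroup W] [Finite V] {f : V →+ W}
    (hf : Function.Surjective f) (w : W) : {v | f v = w}.ncard * Nat.card W = Nat.card V := by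
  classical
  have := Fintype.ofFinite V
  have : Finite W := Finite.of_surjective f hf
  have := Fintype.ofFinite W
  have hw : {v | f v = w}.ncard = (Finset.univ.filter fun v => f v = w).card := by
    rw [← Set.ncard_coe_finset]
    simp
  rw [hw, Nat.card_eq_fintype_card, Nat.card_eq_fintype_card, ← Finset.card_univ (α := V),
    Finset.card_eq_sum_card_fiberwise (s := (Finset.univ : Finset V)) (t := Finset.univ) (f := f) (by simp),
    Finset.sum_congr rfl fun b _ => AddMonoidHom.card_fiber_eq_of_mem_range f (hf b) (hf w)]
  simp [mul_comm]

/-- for `q = p^h`, `p` an odd prime, `h ≥ 2`, the set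
`A = {⟨(1,x,Tr(x))⟩ : x ∈ F_q}` together with the set `N` of points of the line
`X = 0` not of the form `⟨(0,x,Tr(x))⟩` (`x ≠ 0`) is a set without tangents of
size `2q - q/p`. -/
theorem stmt_17 [Fintype F] (p h : ℕ) (hp : p.Prime) (hodd : Odd p) (hh : 2 ≤ h)
    (hcard : Fintype.card F = p ^ h) :
    NoTangents
      ({P : PGPoint F | ∃ x : F, P.submodule = Submodule.span F {![1, x, trMap F p h x]}} ∪
        (pointsOn (lineX0 F) \
          {P : PGPoint F | ∃ x : F, x ≠ 0 ∧
            P.submodule = Submodule.span F {![0, x, trMap F p h x]}})) ∧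
    ({P : PGPoint F | ∃ x : F, P.submodule = Submodule.span F {![1, x, trMap F p h x]}} ∪
        (pointsOn (lineX0 F) \
          {P : PGPoint F | ∃ x : F, x ≠ 0 ∧
            P.submodule = Submodule.span F {![0, x, trMap F p h x]}})).ncard
      = 2 * p ^ h - p ^ h / p := by
  have : Fact p.Prime := ⟨hp⟩
  have : CharP F p := charP_of_card_eq_prime_pow hcard
  let _ : Algebra (ZMod p) F := ZMod.algebra F p
  have htr := trMap_eq_trace hcard
  have hsurj := Algebra.trace_surjective (ZMod p) F
  have hfib (t : ZMod p) : {x : F | Algebra.trace (ZMod p) F x = t}.ncard * p = p ^ h := by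
    have := ncard_fiber_mul_card (f := (Algebra.trace (ZMod p) F).toAddMonoidHom) hsurj t
    rwa [Nat.card_zmod, Nat.card_eq_fintype_card, hcard] at this
  have hT : IsTraceLike (trMap F p h) := by
    refine ⟨fun x y => by simp [htr], fun x y => ?_, ?_⟩
    · rw [htr, htr y, htr x, mul_comm x, ← Algebra.smul_def, map_smul, smul_eq_mul, map_mul,
        mul_comm]
    · by_contra! hk
      have hle : {x : F | Algebra.trace (ZMod p) F x = 0}.ncard ≤ 1 := by
        rw [Set.ncard_le_one]
        have h0 (x : F) (hx : Algebra.trace (ZMod p) F x = 0) : x = 0 := by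
          by_contra hx0
          exact hk x hx0 (by rw [htr, hx, map_zero])
        exact fun x hx y hy => (h0 x hx).trans (h0 y hy).symm
      have h1 : p ^ h ≤ p ^ 1 := by
        rw [← hfib 0, pow_one]
        exact (Nat.mul_le_mul_right p hle).trans_eq (one_mul p)
      have := (Nat.pow_le_pow_iff_right hp.one_lt).1 h1
      omega
  rw [affine_eq_range, hT.nondirections_eq]
  refine ⟨hT.noTangents, ?_⟩
  have hset : {y : F | trMap F p h y = 1} = {x : F | Algebra.trace (ZMod p) F x = 1} := by
    ext y
    simp [htr]
  rw [ncard_affine_union_infinite, hset, Nat.card_eq_fintype_card, hcard,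
    Nat.eq_div_of_mul_eq_left hp.ne_zero (hfib 1)]
  have := Nat.div_le_self (p ^ h) p
  omega
end

section
/- The smallest non-empty set without tangents in PG(2,11) has exactly 18 points: there exists a set without tangents of size 18 in PG(2,11), and every non-empty set without tangents in PG(2,11) has at least 18 points. -/
/-!
`PG(2,F)`: points are the 1-dimensional subspaces of `F^3` (modelled as the
projectivization of `Fin 3 → F`), lines are the 2-dimensional subspaces.
-/

variable {F : Type*} [Field F]

namespace AffinePlaneEleven

/-- The slopes `s` other than `0` and `1`, each with the number whose bits are
`22 * x + s * x % 11` for `x < 11`. -/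
def slopes : List (ℕ × ℕ) :=
  [(2, 862718344770840954708297719620688581001966707368188415647202662154241),
   (3, 431359159529914973933863689094418174008780902159129828780517078597633),
   (4, 215679576551179286591393590326125803296311522685252738015442105270273),
   (5, 107839787472083841272581470476056202366650931468624291829335218716673),
   (6, 53920304710442142398077447947396957650437471001725630337772932825089),
   (7, 26960049511185663932718011614959441769168500391517110994655560859649),
   (8, 13479999044633067898531296671649802702059520022876588558431046074369),
   (9, 6739993094545966972637331619546624322789727295829863967684831477761),
   (10, 3369994940332640481459460955826106018741585888427908067891355844609)]

/-- The number whose bits are `22 * x + y` for `x, y < 11`. -/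
def gridMask : ℕ :=
  3449188999079325191963489508526927312498748456565385960217874477877247

/-- Cell `11 * a + b`, of width 44 bits, packs up to four 11-bit masks of subsets of `ZMod 11`
covering the supports of all multisets of size 13 with multiplicities in `{0, 2, 3}`, at most one
of them `3`, and power sums `p₁ = 0`, `p₂ = a`, `p₃ = b`. -/
def tableThree : ℕ :=
  1668100354613654581313589312693468769904200912834715337593791425520966917279667795758762576339133193248942401437458988975522399160057152411552355559378463689482142052910533991479347757212531261179978353916718741732765915252830889118086607662181234620788743320119690112588889856261389368787071549372178991602784116753999807802235937365898291675228645332484584333778377053989227321353386389264395499582279782560773012297098745826207400516823165953422389541695621202977354654620578341329230197458361616005297945838791168092187226156797646807685477971659299215205406439074068575158253352351058000615779728572827412286137113422179587428630546000708264934632855386290061457723161169574841465560464052999112777806680382770335234309040667294735015377841296330488663480598928501264091248049791788546146388130068715899467112854059002039689928852874533648383113943858020768115790007555253272587141437468130189084793420689916846382060111895179608477745009621792030573837432443062559519581046069144918070977954756392817463691949323058535653093850071195270342207482136175227516179525163933738295919796371714034435049089405273978530134289140199856530220118250758100545450627064958960978575069712874346899052319599763781728800824765287238477387012156116954152401307658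755311850222636052569355818364250795730954026611531096569031076657063222054628138135449865412678856499102564415682270112513799563153230478878045465169313642784847852576057233061909522436018239671754138153012172366234448380184880911676173782579615905471150253948228927954868384449556139821478812697948989516792443025256493543815471928733600567929403

/-- Like `tableThree`, for multiplicities in `{0, 2, 3, 5}` and power sums `p₁ = p₃ = 0`,
`p₂ = a`, `p₄ = b`. -/
def tableFour : ℕ :=
  1230887822192444586669660905069291629572639761188980475228651307161803753864504064918678175388533357068753034890339287224829631723363605926980519907296800653597015305896531783782255474939307438121442681793431043935343419045989068086936419522635587233124826295062419610849149045770609029625303828871632995936728393222972159012795736583547101863548945288955673596724093603704084158515713460583001672661513724167623837533014676433317058881829133891959502826885888768689663485942665009180025225433199324012231550767183183680803468824440282014695265586917512129703958856191792089102767248152111068470720906303925663099565034477781768115230396106782163814303619008524074272160038953109984892812868497015635480004401403556266808928070699401257524471182380595044755332438267716728806097379689853865374169728185802456811839501958331062579936410263322000321751433324640670574430650026250004394316938727499091862815153967507445624630896551753074127814364345038352788644317357235469510581708270017382613593468732520056507193700960114419023621595881732031337872898261286901729171656040643582823650547258758534141635348116948125782618104254394956261720960159725012789241466703643604434871999455274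754352097051370436165481475834556826906154301602670961097024291864449322750476608491460148964799865376639591018206668998361933176394753778960008873116519791668236336673477764243285842648270451876678607557899811698059117602853325177222635459163286116456357328905127521945694498909038509942932418635461983086711205699964443341826996672218715212981342016546007360809670758516522883958758185018477550628723863323482663483

/-- If bit `t` of `m` encodes the value `t` and `k` is the number paired with a slope `s`, the bits
of `spread k m` encode the points `(x, y)` for which `y - s * x` is a value in `m`. -/
def spread (k m : ℕ) : ℕ :=
  (m * k ||| (m * k) >>> 11) &&& gridMask

/-- Whether `x` has at most `n` bits set. -/
def fewBits : ℕ → ℕ → Bool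
  | 0, x => Nat.beq x 0
  | n + 1, x => Nat.beq x 0 || fewBits n (Nat.land x (Nat.sub x 1))

/-- The nonzero leading blocks of 11 bits, at most `n` of them. -/
def masks : ℕ → ℕ → List ℕ
  | 0, _ => []
  | n + 1, w => bif Nat.beq w 0 then [] else (w % 2048) :: masks n (w / 2048)

/-- The packed masks in cell `11 * a + b` of a table. -/
def cell (table a b : ℕ) : ℕ :=
  (table >>> (44 * (11 * a + b))) % 17592186044416

/-- No choice of one mask for each slope leaves more than twelve bits of `c`. -/
def refute : List (ℕ × ℕ) → ℕ → Bool
  | [], c => fewBits 12 c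
  | (k, w) :: os, c => fewBits 12 c || (masks 4 w).all fun m => refute os (c &&& spread k m)

/-- `refute`, preceded by a search for a slope without masks. -/
def refuteAll (os : List (ℕ × ℕ)) : Bool :=
  (os.any fun o => Nat.beq o.2 0) || refute os gridMask

/-- The residues `2 * u ^ 2` modulo 11 with `u ≠ 0`. -/
def twiceSquares : List ℕ := [2, 8, 7, 10, 6]

/-- The second power sum of `y - s * x`, given the values `2`, `b`, `c` of those of `x`, `y` and
`y - x`. -/
def secondMoment (b c s : ℕ) : ℕ :=
  (b + s * s * 2 + s * (54 * (2 + b + 10 * c))) % 11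

def refuteThree : Bool :=
  twiceSquares.all fun b => twiceSquares.all fun c => (List.range 11).all fun k =>
    refuteAll (slopes.map fun s =>
      (s.2, cell tableThree (secondMoment b c s.1) (k * (s.1 * (s.1 + 10)) % 11)))

def refuteFour : Bool :=
  twiceSquares.all fun b => twiceSquares.all fun c => slopes.all fun r =>
    !(twiceSquares.any (Nat.beq (secondMoment b c r.1))) || (List.range 11).all fun k =>
      refuteAll ((slopes.filter fun s => !(Nat.beq s.1 r.1)).map fun s =>
        (s.2, cell tableFour (secondMoment b c s.1)
          ((6 * (secondMoment b c s.1 * secondMoment b c s.1) +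
            k * (s.1 * ((s.1 + 10) * (s.1 + (11 - r.1))))) % 11)))

/-- The contribution of the value `i` with multiplicity `n` to the first four power sums, the
support and the number of triple values, in consecutive blocks of bits. -/
def weight (i n : ℕ) : ℕ :=
  n * (i + (i * i % 11) * 256 + (i * i * i % 11) * 65536 + (i * i * i * i % 11) * 16777216) +
    (bif Nat.beq n 0 then 0 else 1) * (1 <<< i) * 4294967296 +
    (bif Nat.beq n 3 then 1 else 0) * 8796093022208

/-- Run `test` on the accumulated weights of all choices of one entry from each list with total
size `left`. -/
def testAll (test : ℕ → Bool) : List (List (ℕ × ℕ)) → ℕ → ℕ → Bool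
  | [], left, acc => !(Nat.beq left 0) || test acc
  | ws :: r, left, acc => ws.all fun w =>
      !(Nat.ble w.1 left) || testAll test r (Nat.sub left w.1) (Nat.add acc w.2)

/-- The entries for multiplicities in `types` of the values modulo 11. -/
def entries (types : List ℕ) : List (List (ℕ × ℕ)) :=
  (List.range 11).map fun i => types.map fun n => (n, weight i n)

def powerSum (acc j : ℕ) : ℕ := acc >>> (8 * j) % 256 % 11

def covered (table a b m : ℕ) : Bool :=
  (masks 4 (cell table a b)).any fun m' => Nat.beq (m &&& m') m

def testThree (acc : ℕ) : Bool :=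
  !(Nat.ble (acc >>> 43) 1) || !(Nat.beq (powerSum acc 0) 0) ||
    covered tableThree (powerSum acc 1) (powerSum acc 2) ((acc >>> 32) % 2048)

def testFour (acc : ℕ) : Bool :=
  !(Nat.beq (powerSum acc 0) 0) || !(Nat.beq (powerSum acc 2) 0) ||
    covered tableFour (powerSum acc 1) (powerSum acc 3) ((acc >>> 32) % 2048)

set_option maxHeartbeats 4000000 in
theorem refuteThree_eq : refuteThree = true := by decide +kernel

set_option maxHeartbeats 4000000 in
theorem refuteFour_eq : refuteFour = true := by decide +kernel

set_option maxHeartbeats 4000000 in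
theorem testAll_three : testAll testThree (entries [0, 2, 3]) 13 0 = true := by decide +kernel

set_option maxHeartbeats 4000000 in
theorem testAll_four : testAll testFour (entries [0, 2, 3, 5]) 13 0 = true := by decide +kernel

theorem exists_testBit_pred (x : ℕ) (hx : x ≠ 0) :
    ∃ p, ∀ t, t ≠ p → x.testBit t = true → (x - 1).testBit t = true := by
  induction x using Nat.strong_induction_on with
  | _ x ih =>
    rcases Nat.even_or_odd' x with ⟨y, rfl | rfl⟩
    · obtain ⟨p, hp⟩ := ih y (by omega) (by omega)
      refine ⟨p + 1, fun t ht h => ?_⟩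
      cases t with
      | zero => simp at h
      | succ t =>
        rw [Nat.testBit_succ] at h ⊢
        rw [show (2 * y - 1) / 2 = y - 1 by omega]
        rw [show 2 * y / 2 = y by omega] at h
        exact hp t (by omega) h
    · refine ⟨0, fun t ht h => ?_⟩
      cases t with
      | zero => exact absurd rfl ht
      | succ t =>
        rw [Nat.testBit_succ] at h ⊢
        rw [show (2 * y + 1 - 1) / 2 = (2 * y + 1) / 2 by omega]
        exact h

theorem card_le_of_fewBits (n : ℕ) : ∀ (x : ℕ) (T : Finset ℕ),
    (∀ t ∈ T, x.testBit t = true) → fewBits n x = true → T.card ≤ n := by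
  induction n with
  | zero =>
    intro x T hT h
    have hx : x = 0 := Nat.eq_of_beq_eq_true h
    subst hx
    simp only [Nat.zero_testBit, Bool.false_eq_true, imp_false] at hT
    simp [Finset.eq_empty_of_forall_notMem hT]
  | succ n ih =>
    intro x T hT h
    by_cases hx : x = 0
    · subst hx
      simp only [Nat.zero_testBit, Bool.false_eq_true, imp_false] at hT
      simp [Finset.eq_empty_of_forall_notMem hT]
    · obtain ⟨p, hp⟩ := exists_testBit_pred x hx
      rw [fewBits, Bool.or_eq_true] at h
      rcases h with h | h
      · exact absurd (Nat.eq_of_beq_eq_true h) hx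
      · have := ih (Nat.land x (Nat.sub x 1)) (T.erase p) (fun t ht => ?_) h
        · have := Finset.pred_card_le_card_erase (s := T) (a := p)
          omega
        · rw [Finset.mem_erase] at ht
          change (x &&& (x - 1)).testBit t = true
          rw [Nat.testBit_and, hT t ht.2, hp t ht.1 (hT t ht.2)]
          rfl

theorem refute_eq_false (T : Finset ℕ) (hT : 12 < T.card) (os : List (ℕ × ℕ)) :
    ∀ c : ℕ, (∀ t ∈ T, c.testBit t = true) →
      (∀ o ∈ os, ∃ m ∈ masks 4 o.2, ∀ t ∈ T, (spread o.1 m).testBit t = true) →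
      refute os c = false := by
  have key : ∀ c : ℕ, (∀ t ∈ T, c.testBit t = true) → fewBits 12 c = false := by
    intro c hc
    by_contra h
    have := card_le_of_fewBits 12 c T hc (by simpa using h)
    omega
  induction os with
  | nil => exact fun c hc _ => key c hc
  | cons o os ih =>
    intro c hc h
    obtain ⟨m, hm, hmT⟩ := h o (by simp)
    rw [refute, key c hc, Bool.false_or, List.all_eq_false]
    refine ⟨m, hm, ?_⟩
    rw [ih (c &&& spread o.1 m) (fun t ht => by rw [Nat.testBit_and, hc t ht, hmT t ht]; rfl)
      fun o' ho' => h o' (by simp [ho'])]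
    simp

theorem refuteAll_eq_false (T : Finset ℕ) (hT : 12 < T.card) (os : List (ℕ × ℕ))
    (hgrid : ∀ t ∈ T, gridMask.testBit t = true)
    (h : ∀ o ∈ os, ∃ m ∈ masks 4 o.2, ∀ t ∈ T, (spread o.1 m).testBit t = true) :
    refuteAll os = false := by
  rw [refuteAll, refute_eq_false T hT os gridMask hgrid h, Bool.or_false, List.any_eq_false]
  intro o ho h0
  obtain ⟨m, hm, -⟩ := h o ho
  rw [Nat.eq_of_beq_eq_true h0] at hm
  simp [masks] at hm

theorem testBit_gridMask {x y : ℕ} (hx : x < 11) (hy : y < 11) :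
    gridMask.testBit (22 * x + y) = true := by
  have h : ∀ x < 11, ∀ y < 11, gridMask.testBit (22 * x + y) = true := by decide +kernel
  exact h x hx y hy

theorem testBit_mul_of_slopes {s k m x t : ℕ} (h : (s, k) ∈ slopes) (hm : m < 2048)
    (hx : x < 11) (ht : t < 11) :
    (m * k).testBit (22 * x + s * x % 11 + t) = m.testBit t := by
  have h' : ∀ o ∈ slopes, ∀ x < 11,
      o.2 % 2 ^ (22 * x + o.1 * x % 11) * 2048 ≤ 2 ^ (22 * x + o.1 * x % 11) ∧
        o.2 / 2 ^ (22 * x + o.1 * x % 11) % 2048 = 1 := by decide +kernel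
  obtain ⟨h1, h2⟩ := h' _ h x hx
  dsimp only at h1 h2
  set e := 22 * x + s * x % 11
  have hpos : 0 < 2 ^ e := by positivity
  have hq : m * k / 2 ^ e % 2048 = m := by
    have hk := Nat.div_add_mod k (2 ^ e)
    set q := k / 2 ^ e
    set r := k % 2 ^ e
    have h3 : m * k = m * r + 2 ^ e * (m * q) := by rw [← hk]; ring
    have h4 : m * r < 2 ^ e := by
      rcases Nat.eq_zero_or_pos r with h0 | h0
      · rw [h0]; simp
      · nlinarith
    rw [h3, Nat.add_mul_div_left _ _ hpos, Nat.div_eq_of_lt h4, zero_add, Nat.mul_mod, h2, mul_one,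
      Nat.mod_mod, Nat.mod_eq_of_lt hm]
  rw [add_comm, ← Nat.testBit_div_two_pow]
  conv_rhs => rw [← hq, show 2048 = 2 ^ 11 by norm_num, Nat.testBit_mod_two_pow]
  simp [ht]

theorem testBit_spread {s k m : ℕ} (h : (s, k) ∈ slopes) (hm : m < 2048) (x y : ZMod 11)
    (ht : m.testBit (y - s * x).val = true) :
    (spread k m).testBit (22 * x.val + y.val) = true := by
  have hx := x.val_lt
  have hy := y.val_lt
  set t := (y - s * x).val with htdef
  have htlt : t < 11 := ZMod.val_lt _
  have hmod : (s * x.val % 11 + t) % 11 = y.val := by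
    have : ((s * x.val % 11 + t : ℕ) : ZMod 11) = y := by
      push_cast
      rw [ZMod.natCast_mod, htdef]
      push_cast
      simp
    rw [← this, ZMod.val_natCast]
  have hs : s * x.val % 11 < 11 := Nat.mod_lt _ (by norm_num)
  have key := testBit_mul_of_slopes h hm hx htlt
  rw [ht] at key
  rw [spread, Nat.testBit_and, testBit_gridMask hx hy, Bool.and_true, Nat.testBit_or,
    Nat.testBit_shiftRight, Bool.or_eq_true]
  by_cases hc : s * x.val % 11 + t < 11
  · left
    rw [← key]
    congr 1
    omega
  · right
    rw [← key]
    congr 1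
    omega

theorem test_of_testAll (test : ℕ → Bool) {cs : List (ℕ × ℕ)} {ws : List (List (ℕ × ℕ))}
    (h : List.Forall₂ (· ∈ ·) cs ws) :
    ∀ left acc : ℕ, (cs.map Prod.fst).sum = left → testAll test ws left acc = true →
      test (acc + (cs.map Prod.snd).sum) = true := by
  induction h with
  | nil =>
    rintro left acc rfl h
    simpa [testAll, Nat.beq] using h
  | @cons c l cs ws hc _ ih =>
    intro left acc hsum h
    rw [List.map_cons, List.sum_cons] at hsum
    rw [testAll, List.all_eq_true] at h
    have h1 := h c hc
    rw [Bool.or_eq_true] at h1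
    rcases h1 with h1 | h1
    · rw [Bool.not_eq_true', ← Bool.not_eq_true, Nat.ble_eq] at h1
      omega
    · have h2 := ih _ _ (by change _ = left - c.1; omega) h1
      rw [List.map_cons, List.sum_cons, ← add_assoc]
      exact h2

theorem sum_two_pow_lt_and_testBit (p : ℕ → Bool) (N : ℕ) :
    (∑ i ∈ Finset.range N, (p i).toNat * 2 ^ i) < 2 ^ N ∧
      ∀ j < N, (∑ i ∈ Finset.range N, (p i).toNat * 2 ^ i).testBit j = p j := by
  induction N with
  | zero => simp
  | succ N ih =>
    obtain ⟨h1, h2⟩ := ih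
    rw [Finset.sum_range_succ]
    refine ⟨?_, fun j hj => ?_⟩
    · have := Bool.toNat_le (p N)
      rw [pow_succ]
      nlinarith [Nat.two_pow_pos N]
    · rw [add_comm, mul_comm, Nat.testBit_two_pow_mul_add _ h1]
      split_ifs with hlt
      · exact h2 j hlt
      · obtain rfl : j = N := by omega
        cases p j <;> simp

theorem lt_of_mem_masks (n : ℕ) : ∀ (w m : ℕ), m ∈ masks n w → m < 2048 := by
  induction n with
  | zero => simp [masks]
  | succ n ih =>
    intro w m hm
    rw [masks] at hm
    cases h : Nat.beq w 0 <;> rw [h] at hm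
    · rw [cond_false, List.mem_cons] at hm
      rcases hm with rfl | hm
      · exact Nat.mod_lt _ (by norm_num)
      · exact ih _ _ hm
    · simp at hm

/-- The data that can be read off from the accumulated weight of the multiplicities `n`. -/
theorem exists_weight_decomposition (n : ℕ → ℕ) (hsum : ∑ i ∈ Finset.range 11, n i = 13) :
    ∃ P : ℕ → ℕ, ∃ supp triple acc : ℕ,
      acc = ∑ i ∈ Finset.range 11, weight i (n i) ∧
      (∀ j < 4, powerSum acc j = P j % 11) ∧
      (∀ j < 4, P j % 11 = (∑ i ∈ Finset.range 11, n i * i ^ (j + 1)) % 11) ∧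
      (acc >>> 32) % 2048 = supp ∧ acc >>> 43 = triple ∧
      triple = ((Finset.range 11).filter (fun i => n i = 3)).card ∧
      ∀ i < 11, supp.testBit i = !(Nat.beq (n i) 0) := by
  let P : ℕ → ℕ := fun j => ∑ i ∈ Finset.range 11, n i * (i ^ (j + 1) % 11)
  have hP : ∀ j, P j < 256 := by
    intro j
    calc P j ≤ ∑ i ∈ Finset.range 11, n i * 10 := by
          refine Finset.sum_le_sum fun i _ => Nat.mul_le_mul_left _ ?_
          have := Nat.mod_lt (i ^ (j + 1)) (show 11 > 0 by norm_num)
          omega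
      _ = 13 * 10 := by rw [← Finset.sum_mul, hsum]
      _ < 256 := by norm_num
  have hPmod : ∀ j, P j % 11 = (∑ i ∈ Finset.range 11, n i * i ^ (j + 1)) % 11 := by
    intro j
    simp only [P]
    rw [Finset.sum_nat_mod, Finset.sum_nat_mod _ _ (fun i => n i * i ^ (j + 1))]
    simp [Nat.mul_mod]
  obtain ⟨hs1, hs2⟩ := sum_two_pow_lt_and_testBit (fun i => !(Nat.beq (n i) 0)) 11
  set supp := ∑ i ∈ Finset.range 11, (!(Nat.beq (n i) 0)).toNat * 2 ^ i with hsupp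
  set triple := ((Finset.range 11).filter (fun i => n i = 3)).card with htriple
  have hacc : ∑ i ∈ Finset.range 11, weight i (n i) =
      P 0 + P 1 * 256 + P 2 * 65536 + P 3 * 16777216 + supp * 4294967296 +
        triple * 8796093022208 := by
    rw [htriple, Finset.card_filter, hsupp]
    simp only [P, Finset.sum_mul, ← Finset.sum_add_distrib]
    refine Finset.sum_congr rfl fun i hi => ?_
    have e0 : i ^ (0 + 1) % 11 = i := by
      rw [zero_add, pow_one, Nat.mod_eq_of_lt (Finset.mem_range.1 hi)]
    have e1 : (bif Nat.beq (n i) 0 then 0 else 1) = (!(Nat.beq (n i) 0)).toNat := by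
      cases Nat.beq (n i) 0 <;> rfl
    have e2 : (bif Nat.beq (n i) 3 then 1 else 0) = if n i = 3 then 1 else 0 := by
      by_cases h : n i = 3
      · rw [h]; rfl
      · rw [if_neg h]
        cases hb : Nat.beq (n i) 3
        · rfl
        · exact absurd (Nat.eq_of_beq_eq_true hb) h
    rw [weight, e0, e1, e2, Nat.one_shiftLeft]
    ring_nf
  refine ⟨P, supp, triple, _, rfl, ?_, fun j _ => hPmod j, ?_, ?_, rfl, hs2⟩
  · have := hP 0
    have := hP 1
    have := hP 2
    have := hP 3
    intro j hj
    rw [powerSum, Nat.shiftRight_eq_div_pow, hacc]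
    interval_cases j <;> norm_num <;> congr 1 <;> omega
  · have := hP 0
    have := hP 1
    have := hP 2
    have := hP 3
    rw [Nat.shiftRight_eq_div_pow, hacc]
    norm_num at hs1 ⊢
    omega
  · have := hP 0
    have := hP 1
    have := hP 2
    have := hP 3
    rw [Nat.shiftRight_eq_div_pow, hacc]
    norm_num at hs1 ⊢
    omega

theorem sum_map_range (f : ℕ → ℕ) (N : ℕ) :
    ((List.range N).map f).sum = ∑ i ∈ Finset.range N, f i := rfl

theorem test_of_multiplicities {test : ℕ → Bool} {types : List ℕ}
    (h : testAll test (entries types) 13 0 = true) (n : ℕ → ℕ) (hn : ∀ i < 11, n i ∈ types)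
    (hsum : ∑ i ∈ Finset.range 11, n i = 13) :
    test (∑ i ∈ Finset.range 11, weight i (n i)) = true := by
  have key := test_of_testAll test (cs := (List.range 11).map fun i => (n i, weight i (n i)))
    (ws := entries types) ?_ 13 0 ?_ h
  · simpa only [zero_add, List.map_map, Function.comp_def, sum_map_range] using key
  · rw [entries, List.forall₂_map_left_iff, List.forall₂_map_right_iff, List.forall₂_same]
    intro i hi
    exact List.mem_map_of_mem (hn i (List.mem_range.1 hi))
  · rw [← hsum]
    simp only [List.map_map, Function.comp_def, sum_map_range]

theorem exists_mask_of_covered {table a b m : ℕ} (h : covered table a b m = true) :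
    ∃ m' ∈ masks 4 (cell table a b), ∀ i, m.testBit i = true → m'.testBit i = true := by
  rw [covered, List.any_eq_true] at h
  obtain ⟨m', hm', h⟩ := h
  refine ⟨m', hm', fun i hi => ?_⟩
  rw [← Nat.eq_of_beq_eq_true h, Nat.testBit_and, Bool.and_eq_true] at hi
  exact hi.2

theorem exists_mask_three (n : ℕ → ℕ) (hn : ∀ i < 11, n i ∈ [0, 2, 3])
    (hsum : ∑ i ∈ Finset.range 11, n i = 13)
    (htriple : ((Finset.range 11).filter (fun i => n i = 3)).card ≤ 1)
    (h1 : (∑ i ∈ Finset.range 11, n i * i ^ 1) % 11 = 0) :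
    ∃ m ∈ masks 4 (cell tableThree ((∑ i ∈ Finset.range 11, n i * i ^ 2) % 11)
      ((∑ i ∈ Finset.range 11, n i * i ^ 3) % 11)), ∀ i < 11, n i ≠ 0 → m.testBit i = true := by
  obtain ⟨P, supp, triple, acc, hacc, hP, hPsum, hsupp, htr, htr', hbits⟩ :=
    exists_weight_decomposition n hsum
  have h := test_of_multiplicities testAll_three n hn hsum
  rw [← hacc, testThree, hsupp, htr, hP 0 (by norm_num), hP 1 (by norm_num), hP 2 (by norm_num),
    hPsum 0 (by norm_num), hPsum 1 (by norm_num), hPsum 2 (by norm_num), h1, htr',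
    Nat.ble_eq_true_of_le htriple] at h
  obtain ⟨m, hm, hmb⟩ := exists_mask_of_covered (by simpa [Nat.beq] using h)
  refine ⟨m, hm, fun i hi h0 => hmb i ?_⟩
  rw [hbits i hi]
  cases hb : Nat.beq (n i) 0
  · rfl
  · exact absurd (Nat.eq_of_beq_eq_true hb) h0

theorem exists_mask_four (n : ℕ → ℕ) (hn : ∀ i < 11, n i ∈ [0, 2, 3, 5])
    (hsum : ∑ i ∈ Finset.range 11, n i = 13)
    (h1 : (∑ i ∈ Finset.range 11, n i * i ^ 1) % 11 = 0)
    (h3 : (∑ i ∈ Finset.range 11, n i * i ^ 3) % 11 = 0) :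
    ∃ m ∈ masks 4 (cell tableFour ((∑ i ∈ Finset.range 11, n i * i ^ 2) % 11)
      ((∑ i ∈ Finset.range 11, n i * i ^ 4) % 11)), ∀ i < 11, n i ≠ 0 → m.testBit i = true := by
  obtain ⟨P, supp, triple, acc, hacc, hP, hPsum, hsupp, htr, htr', hbits⟩ :=
    exists_weight_decomposition n hsum
  have h := test_of_multiplicities testAll_four n hn hsum
  rw [← hacc, testFour, hsupp, hP 0 (by norm_num), hP 1 (by norm_num), hP 2 (by norm_num),
    hP 3 (by norm_num), hPsum 0 (by norm_num), hPsum 1 (by norm_num), hPsum 2 (by norm_num),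
    hPsum 3 (by norm_num), h1, h3] at h
  obtain ⟨m, hm, hmb⟩ := exists_mask_of_covered (by simpa [Nat.beq] using h)
  refine ⟨m, hm, fun i hi h0 => hmb i ?_⟩
  rw [hbits i hi]
  cases hb : Nat.beq (n i) 0
  · rfl
  · exact absurd (Nat.eq_of_beq_eq_true hb) h0

instance : Fact (Nat.Prime 11) := ⟨by norm_num⟩

/-- The coordinate that is constant on the affine lines of slope `s`; `none` is the vertical
slope. -/
def coord (s : Option (ZMod 11)) (p : ZMod 11 × ZMod 11) : ZMod 11 :=
  s.elim p.1 fun s => p.2 - s * p.1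

/-- The number of points of `U` on a line of slope `s`. -/
def lineCard (U : Finset (ZMod 11 × ZMod 11)) (s : Option (ZMod 11)) (t : ZMod 11) : ℕ :=
  (U.filter fun p => coord s p = t).card

/-- The power sums of the values of a coordinate. -/
def moment (U : Finset (ZMod 11 × ZMod 11)) (s : Option (ZMod 11)) (j : ℕ) : ZMod 11 :=
  ∑ p ∈ U, coord s p ^ j

/-- Every line of slope `s` meets `U`, in a number of points other than three. -/
def IsFull (U : Finset (ZMod 11 × ZMod 11)) (s : Option (ZMod 11)) : Prop :=
  ∀ t, lineCard U s t ≠ 0 ∧ lineCard U s t ≠ 3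

theorem sum_lineCard (U : Finset (ZMod 11 × ZMod 11)) (s : Option (ZMod 11)) :
    ∑ t, lineCard U s t = U.card :=
  (Finset.card_eq_sum_card_fiberwise fun _ _ => Finset.mem_univ _).symm

theorem sum_lineCard_mul (U : Finset (ZMod 11 × ZMod 11)) (s : Option (ZMod 11))
    (g : ZMod 11 → ZMod 11) : ∑ p ∈ U, g (coord s p) = ∑ t, (lineCard U s t : ZMod 11) * g t := by
  rw [← Finset.sum_fiberwise U (coord s)]
  refine Finset.sum_congr rfl fun t _ => ?_
  rw [Finset.sum_congr rfl fun p hp => by rw [(Finset.mem_filter.1 hp).2], Finset.sum_const,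
    nsmul_eq_mul, lineCard]

theorem sum_zmod_eq_sum_range {M : Type*} [AddCommMonoid M] (g : ZMod 11 → M) :
    ∑ t, g t = ∑ i ∈ Finset.range 11, g (i : ZMod 11) := by
  rw [Finset.sum_range]
  exact Finset.sum_congr rfl fun i _ => congrArg g (ZMod.natCast_zmod_val (n := 11) i).symm

theorem sum_lineCard_mul_pow_mod (U : Finset (ZMod 11 × ZMod 11)) (s : Option (ZMod 11)) (j : ℕ) :
    (∑ i ∈ Finset.range 11, lineCard U s i * i ^ j) % 11 = (moment U s j).val := by
  rw [moment, sum_lineCard_mul U s (· ^ j), sum_zmod_eq_sum_range, ← ZMod.val_natCast]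
  push_cast
  rfl

/-- In a full direction, two values occur twice and the others once. -/
theorem IsFull.exists_moment {U : Finset (ZMod 11 × ZMod 11)} {s : Option (ZMod 11)}
    (h : IsFull U s) (hU : U.card = 13) (h1 : moment U s 1 = 0) :
    ∃ u : ZMod 11, u ≠ 0 ∧ moment U s 2 = 2 * u ^ 2 ∧ moment U s 3 = 0 ∧
      moment U s 4 = 2 * u ^ 4 := by
  have hsum := sum_lineCard U s
  have hle : ∀ t, lineCard U s t ≤ 3 := by
    intro t
    have h2 : ∑ t' ∈ Finset.univ.erase t, 1 ≤ ∑ t' ∈ Finset.univ.erase t, lineCard U s t' :=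
      Finset.sum_le_sum fun t' _ => Nat.one_le_iff_ne_zero.2 (h t').1
    have h3 := Finset.add_sum_erase Finset.univ (lineCard U s) (Finset.mem_univ t)
    rw [Finset.sum_const, Finset.card_erase_of_mem (Finset.mem_univ t), Finset.card_univ,
      ZMod.card] at h2
    norm_num at h2
    omega
  set A := Finset.univ.filter fun t => lineCard U s t = 2 with hA
  have hval : ∀ t, lineCard U s t = 1 + if lineCard U s t = 2 then 1 else 0 := by
    intro t
    have := h t
    have := hle t
    split_ifs <;> omega
  have hcard : A.card = 2 := by
    rw [hA, Finset.card_filter]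
    rw [Finset.sum_congr rfl fun t _ => hval t, Finset.sum_add_distrib, hU] at hsum
    simp only [Finset.sum_const, Finset.card_univ, ZMod.card, smul_eq_mul, mul_one] at hsum
    omega
  obtain ⟨a, b, hab, hAab⟩ := Finset.card_eq_two.1 hcard
  have hmom : ∀ j, moment U s j = (∑ t : ZMod 11, t ^ j) + (a ^ j + b ^ j) := by
    intro j
    rw [moment, sum_lineCard_mul U s (· ^ j), ← Finset.sum_pair (f := (· ^ j)) hab, ← hAab, hA,
      Finset.sum_filter, ← Finset.sum_add_distrib]
    refine Finset.sum_congr rfl fun t _ => ?_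
    rw [hval t]
    by_cases ht : lineCard U s t = 2 <;> simp [ht]
    ring
  have e1 : ∑ t : ZMod 11, t ^ 1 = 0 := by decide
  have e2 : ∑ t : ZMod 11, t ^ 2 = 0 := by decide
  have e3 : ∑ t : ZMod 11, t ^ 3 = 0 := by decide
  have e4 : ∑ t : ZMod 11, t ^ 4 = 0 := by decide
  have hb : b = -a := by
    rw [hmom, e1] at h1
    linear_combination h1
  subst hb
  refine ⟨a, ?_, ?_, ?_, ?_⟩
  · rintro rfl
    simp at hab
  · rw [hmom, e2]; ring
  · rw [hmom, e3]; ring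
  · rw [hmom, e4]; ring

theorem IsFull.val_moment_mem {U : Finset (ZMod 11 × ZMod 11)} {s : Option (ZMod 11)}
    (h : IsFull U s) (hU : U.card = 13) (h1 : moment U s 1 = 0) :
    (moment U s 2).val ∈ twiceSquares := by
  obtain ⟨u, hu, h2, -⟩ := h.exists_moment hU h1
  have key : ∀ u : ZMod 11, u ≠ 0 → (2 * u ^ 2).val ∈ twiceSquares := by decide
  rw [h2]
  exact key u hu

theorem IsFull.moment_three {U : Finset (ZMod 11 × ZMod 11)} {s : Option (ZMod 11)}
    (h : IsFull U s) (hU : U.card = 13) (h1 : moment U s 1 = 0) : moment U s 3 = 0 := by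
  obtain ⟨u, -, -, h3, -⟩ := h.exists_moment hU h1
  exact h3

theorem IsFull.moment_four {U : Finset (ZMod 11 × ZMod 11)} {s : Option (ZMod 11)}
    (h : IsFull U s) (hU : U.card = 13) (h1 : moment U s 1 = 0) :
    moment U s 4 = 6 * moment U s 2 ^ 2 := by
  obtain ⟨u, -, h2, -, h4⟩ := h.exists_moment hU h1
  rw [h2, h4]
  have h11 : (11 : ZMod 11) = 0 := by decide
  linear_combination -2 * u ^ 4 * h11

theorem moment_some_one (U : Finset (ZMod 11 × ZMod 11)) (s : ZMod 11) :
    moment U (some s) 1 = ∑ p ∈ U, p.2 - s * ∑ p ∈ U, p.1 := by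
  simp [moment, coord, Finset.mul_sum]

theorem moment_some_two (U : Finset (ZMod 11 × ZMod 11)) (s : ZMod 11) :
    moment U (some s) 2 =
      ∑ p ∈ U, p.2 ^ 2 - 2 * s * ∑ p ∈ U, p.1 * p.2 + s ^ 2 * ∑ p ∈ U, p.1 ^ 2 := by
  simp only [moment, coord, Option.elim, Finset.mul_sum, ← Finset.sum_add_distrib,
    ← Finset.sum_sub_distrib]
  exact Finset.sum_congr rfl fun p _ => by ring

theorem moment_some_three (U : Finset (ZMod 11 × ZMod 11)) (s : ZMod 11) :
    moment U (some s) 3 =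
      ∑ p ∈ U, p.2 ^ 3 - 3 * s * ∑ p ∈ U, p.1 * p.2 ^ 2 + 3 * s ^ 2 * ∑ p ∈ U, p.1 ^ 2 * p.2 -
        s ^ 3 * ∑ p ∈ U, p.1 ^ 3 := by
  simp only [moment, coord, Option.elim, Finset.mul_sum, ← Finset.sum_add_distrib,
    ← Finset.sum_sub_distrib]
  exact Finset.sum_congr rfl fun p _ => by ring

theorem moment_some_four (U : Finset (ZMod 11 × ZMod 11)) (s : ZMod 11) :
    moment U (some s) 4 =
      ∑ p ∈ U, p.2 ^ 4 - 4 * s * ∑ p ∈ U, p.1 * p.2 ^ 3 + 6 * s ^ 2 * ∑ p ∈ U, p.1 ^ 2 * p.2 ^ 2 -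
        4 * s ^ 3 * ∑ p ∈ U, p.1 ^ 3 * p.2 + s ^ 4 * ∑ p ∈ U, p.1 ^ 4 := by
  simp only [moment, coord, Option.elim, Finset.mul_sum, ← Finset.sum_add_distrib,
    ← Finset.sum_sub_distrib]
  exact Finset.sum_congr rfl fun p _ => by ring

theorem val_moment_two (U : Finset (ZMod 11 × ZMod 11)) (hx : moment U none 2 = 2) (s : ZMod 11) :
    (moment U (some s) 2).val =
      secondMoment (moment U (some 0) 2).val (moment U (some 1) 2).val s.val := by
  rw [secondMoment, ← ZMod.val_natCast]
  congr 1
  push_cast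
  simp only [ZMod.natCast_zmod_val]
  simp only [moment_some_two]
  have hx' : ∑ p ∈ U, p.1 ^ 2 = 2 := hx
  rw [hx']
  have h11 : (11 : ZMod 11) = 0 := by decide
  linear_combination (-s * (∑ p ∈ U, p.2 ^ 2) * 54 + s * 98 * (∑ p ∈ U, p.1 * p.2) - s * 108) * h11

/-- A mask for the values of the coordinate `s` yields bits for all points of `U`. -/
theorem testBit_spread_of_mem {U : Finset (ZMod 11 × ZMod 11)} {s k m : ℕ} (h : (s, k) ∈ slopes)
    (hm : m < 2048)
    (hmask : ∀ i : ℕ, i < 11 → lineCard U (some (s : ZMod 11)) i ≠ 0 → m.testBit i = true) :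
    ∀ t ∈ U.image (fun p => 22 * p.1.val + p.2.val), (spread k m).testBit t = true := by
  intro t ht
  obtain ⟨p, hp, rfl⟩ := Finset.mem_image.1 ht
  refine testBit_spread h hm p.1 p.2 (hmask _ (ZMod.val_lt _) ?_)
  rw [lineCard, Finset.card_ne_zero]
  refine ⟨p, Finset.mem_filter.2 ⟨hp, ?_⟩⟩
  rw [ZMod.natCast_zmod_val]
  rfl

theorem refuteAll_eq_false_of_masks {U : Finset (ZMod 11 × ZMod 11)} (hU : U.card = 13)
    (os : List (ℕ × ℕ))
    (h : ∀ o ∈ os, ∃ s, (s, o.1) ∈ slopes ∧ ∃ m ∈ masks 4 o.2, ∀ i : ℕ, i < 11 →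
      lineCard U (some (s : ZMod 11)) i ≠ 0 → m.testBit i = true) :
    refuteAll os = false := by
  refine refuteAll_eq_false (U.image fun p => 22 * p.1.val + p.2.val) ?_ os ?_ ?_
  · rw [Finset.card_image_of_injective, hU]
    · norm_num
    · rintro ⟨x, y⟩ ⟨x', y'⟩ hxy
      have := x.val_lt
      have := x'.val_lt
      have := y.val_lt
      have := y'.val_lt
      dsimp only at hxy
      exact Prod.ext (ZMod.val_injective 11 (by dsimp only; omega))
        (ZMod.val_injective 11 (by dsimp only; omega))
  · intro t ht
    obtain ⟨p, -, rfl⟩ := Finset.mem_image.1 ht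
    exact testBit_gridMask (ZMod.val_lt _) (ZMod.val_lt _)
  · intro o ho
    obtain ⟨s, hs, m, hm, hmask⟩ := h o ho
    exact ⟨m, hm, testBit_spread_of_mem hs (lt_of_mem_masks 4 _ _ hm) hmask⟩

theorem slopes_bounds : ∀ o ∈ slopes, 2 ≤ o.1 ∧ o.1 < 11 := by decide

theorem natCast_ne_of_slopes {s k : ℕ} (h : (s, k) ∈ slopes) :
    (s : ZMod 11) ≠ 0 ∧ (s : ZMod 11) ≠ 1 ∧ (s : ZMod 11).val = s := by
  obtain ⟨h2, h11⟩ := slopes_bounds _ h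
  dsimp only at h2 h11
  have hv : (s : ZMod 11).val = s := ZMod.val_cast_of_lt h11
  refine ⟨fun h => ?_, fun h => ?_, hv⟩ <;> rw [h] at hv
  · change 0 = s at hv
    omega
  · change 1 = s at hv
    omega

theorem not_centered_three (U : Finset (ZMod 11 × ZMod 11)) (hU : U.card = 13)
    (hx1 : ∑ p ∈ U, p.1 = 0) (hy1 : ∑ p ∈ U, p.2 = 0) (hx2 : moment U none 2 = 2)
    (hinf : IsFull U none) (h0 : IsFull U (some 0)) (h1 : IsFull U (some 1))
    (h : ∀ s : ZMod 11, s ≠ 0 → s ≠ 1 → ∀ t, lineCard U (some s) t ∈ [0, 2, 3])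
    (h3 : ∀ s : ZMod 11, s ≠ 0 → s ≠ 1 → ∀ t t', lineCard U (some s) t = 3 →
      lineCard U (some s) t' = 3 → t = t') : False := by
  have hm1 : ∀ s : ZMod 11, moment U (some s) 1 = 0 := fun s => by
    rw [moment_some_one, hx1, hy1]; ring
  have hm1' : moment U none 1 = 0 := by simpa [moment, coord] using hx1
  have e1 : ∑ p ∈ U, p.1 ^ 3 = 0 := hinf.moment_three hU hm1'
  have e2 := h0.moment_three hU (hm1 0)
  have e3 := h1.moment_three hU (hm1 1)
  rw [moment_some_three] at e2 e3
  set κ := 3 * ∑ p ∈ U, p.1 ^ 2 * p.2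
  have hm3 : ∀ s : ZMod 11, moment U (some s) 3 = κ * (s * (s - 1)) := by
    intro s
    rw [moment_some_three]
    simp only [κ]
    linear_combination (1 - s) * e2 + s * e3 + (s - s ^ 3) * e1
  have key := refuteThree_eq
  rw [refuteThree, List.all_eq_true] at key
  have key := List.all_eq_true.1 (key _ (h0.val_moment_mem hU (hm1 0))) _
    (h1.val_moment_mem hU (hm1 1))
  have key := List.all_eq_true.1 key κ.val (List.mem_range.2 (ZMod.val_lt _))
  rw [refuteAll_eq_false_of_masks hU] at key
  · exact Bool.false_ne_true key
  intro o ho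
  obtain ⟨⟨s, k⟩, hs, rfl⟩ := List.mem_map.1 ho
  refine ⟨s, hs, ?_⟩
  obtain ⟨hs0, hs1, hv⟩ := natCast_ne_of_slopes hs
  have hmask := exists_mask_three (fun i => lineCard U (some (s : ZMod 11)) i)
    (fun i _ => h _ hs0 hs1 _) ?_ ?_ ?_
  · rw [sum_lineCard_mul_pow_mod, sum_lineCard_mul_pow_mod, val_moment_two U hx2, hv, hm3] at hmask
    convert hmask using 5
    rw [← ZMod.val_natCast]
    push_cast
    rw [ZMod.natCast_zmod_val]
    congr 2
    have h11 : (11 : ZMod 11) = 0 := by decide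
    linear_combination κ * s * h11
  · rw [← sum_zmod_eq_sum_range, sum_lineCard, hU]
  · refine Finset.card_le_one.2 fun i hi j hj => ?_
    rw [Finset.mem_filter, Finset.mem_range] at hi hj
    have := congrArg ZMod.val (h3 _ hs0 hs1 _ _ hi.2 hj.2)
    rwa [ZMod.val_cast_of_lt hi.1, ZMod.val_cast_of_lt hj.1] at this
  · rw [sum_lineCard_mul_pow_mod, hm1]
    rfl

theorem not_centered_four (U : Finset (ZMod 11 × ZMod 11)) (hU : U.card = 13)
    (hx1 : ∑ p ∈ U, p.1 = 0) (hy1 : ∑ p ∈ U, p.2 = 0) (hx2 : moment U none 2 = 2)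
    (hinf : IsFull U none) (h0 : IsFull U (some 0)) (h1 : IsFull U (some 1))
    {r : ZMod 11} (hr0 : r ≠ 0) (hr1 : r ≠ 1) (hr : IsFull U (some r))
    (h : ∀ s : ZMod 11, s ≠ 0 → s ≠ 1 → s ≠ r → ∀ t, lineCard U (some s) t ∈ [0, 2, 3, 5]) :
    False := by
  have hm1 : ∀ s : ZMod 11, moment U (some s) 1 = 0 := fun s => by
    rw [moment_some_one, hx1, hy1]; ring
  have hm1' : moment U none 1 = 0 := by simpa [moment, coord] using hx1
  have e1 : ∑ p ∈ U, p.1 ^ 3 = 0 := hinf.moment_three hU hm1'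
  have e2 := h0.moment_three hU (hm1 0)
  have e3 := h1.moment_three hU (hm1 1)
  have e4 := hr.moment_three hU (hm1 r)
  rw [moment_some_three] at e2 e3 e4
  have hκ : 3 * ∑ p ∈ U, p.1 ^ 2 * p.2 = 0 := by
    have : r * (r - 1) * (3 * ∑ p ∈ U, p.1 ^ 2 * p.2) = 0 := by
      linear_combination e4 - r * e3 - (1 - r) * e2 + (r ^ 3 - r) * e1
    exact (mul_eq_zero.1 this).resolve_left (mul_ne_zero hr0 (sub_ne_zero.2 hr1))
  have hm3 : ∀ s : ZMod 11, moment U (some s) 3 = 0 := by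
    intro s
    rw [moment_some_three]
    linear_combination (1 - s) * e2 + s * e3 + (s - s ^ 3) * e1 + (s ^ 2 - s) * hκ
  have f1 : ∑ p ∈ U, p.1 ^ 4 = 6 * (∑ p ∈ U, p.1 ^ 2) ^ 2 := hinf.moment_four hU hm1'
  have f2 := h0.moment_four hU (hm1 0)
  have f3 := h1.moment_four hU (hm1 1)
  have f4 := hr.moment_four hU (hm1 r)
  rw [moment_some_four, moment_some_two] at f2 f3 f4
  obtain ⟨κ, hm4⟩ : ∃ κ, ∀ s : ZMod 11, moment U (some s) 4 =
      6 * (moment U (some s) 2 * moment U (some s) 2) + κ * (s * ((s - 1) * (s - r))) := by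
    refine ⟨24 * (∑ p ∈ U, p.1 * p.2) * (∑ p ∈ U, p.1 ^ 2) - 4 * ∑ p ∈ U, p.1 ^ 3 * p.2,
      fun s => mul_left_cancel₀ (mul_ne_zero hr0 (sub_ne_zero.2 hr1)) ?_⟩
    rw [moment_some_four, moment_some_two]
    linear_combination (s - 1) * (s - r) * (r - 1) * f2 - s * (s - r) * r * (f3 - f1) +
      s * (s - 1) * (f4 - r ^ 4 * f1) + r * (r - 1) * s ^ 4 * f1
  have key := refuteFour_eq
  rw [refuteFour, List.all_eq_true] at key
  have key := List.all_eq_true.1 (key _ (h0.val_moment_mem hU (hm1 0))) _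
    (h1.val_moment_mem hU (hm1 1))
  obtain ⟨⟨r', k'⟩, hr', hrr'⟩ : ∃ o ∈ slopes, r.val = o.1 := by
    have : ∀ r : ZMod 11, r ≠ 0 → r ≠ 1 → ∃ o ∈ slopes, r.val = o.1 := by decide
    exact this r hr0 hr1
  dsimp only at hrr'
  subst hrr'
  have key := List.all_eq_true.1 key _ hr'
  dsimp only at key
  have hany : (twiceSquares.any (Nat.beq (secondMoment (moment U (some 0) 2).val
      (moment U (some 1) 2).val r.val))) = true := by
    rw [← val_moment_two U hx2, List.any_eq_true]
    exact ⟨_, hr.val_moment_mem hU (hm1 r), Nat.beq_refl _⟩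
  rw [hany, Bool.not_true, Bool.false_or] at key
  have key := List.all_eq_true.1 key κ.val (List.mem_range.2 (ZMod.val_lt _))
  rw [refuteAll_eq_false_of_masks hU] at key
  · exact Bool.false_ne_true key
  intro o ho
  obtain ⟨⟨s, k⟩, hs, rfl⟩ := List.mem_map.1 ho
  obtain ⟨hs, hsr⟩ := List.mem_filter.1 hs
  refine ⟨s, hs, ?_⟩
  obtain ⟨hs0, hs1, hv⟩ := natCast_ne_of_slopes hs
  have hsr' : (s : ZMod 11) ≠ r := by
    rintro rfl
    rw [hv] at hsr
    simp [Nat.beq_refl] at hsr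
  have hmask := exists_mask_four (fun i => lineCard U (some (s : ZMod 11)) i)
    (fun i _ => h _ hs0 hs1 hsr' _) ?_ ?_ ?_
  · have hmom : secondMoment (moment U (some 0) 2).val (moment U (some 1) 2).val s =
        (moment U (some (s : ZMod 11)) 2).val := by rw [val_moment_two U hx2 s, hv]
    rw [sum_lineCard_mul_pow_mod, sum_lineCard_mul_pow_mod, hm4] at hmask
    dsimp only
    rw [hmom]
    convert hmask using 5
    rw [← ZMod.val_natCast]
    push_cast
    rw [Nat.cast_sub (ZMod.val_lt r).le]
    simp only [ZMod.natCast_zmod_val]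
    congr 2
    have h11 : (11 : ZMod 11) = 0 := by decide
    push_cast
    linear_combination (κ * s * (s - r + s + 10)) * h11
  · rw [← sum_zmod_eq_sum_range, sum_lineCard, hU]
  · rw [sum_lineCard_mul_pow_mod, hm1]
    rfl
  · rw [sum_lineCard_mul_pow_mod, hm3]
    rfl

/-- Homotheties preserve the directions of lines. -/
theorem exists_homothety (U : Finset (ZMod 11 × ZMod 11)) {l : ZMod 11} (hl : l ≠ 0)
    (c : ZMod 11 × ZMod 11) : ∃ V : Finset (ZMod 11 × ZMod 11), V.card = U.card ∧
      (∀ g : ZMod 11 × ZMod 11 → ZMod 11,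
        ∑ p ∈ V, g p = ∑ p ∈ U, g (l * (p.1 - c.1), l * (p.2 - c.2))) ∧
      ∀ s, ∃ e : ZMod 11 ≃ ZMod 11, ∀ t, lineCard V s t = lineCard U s (e t) := by
  have hinj : Function.Injective
      fun p : ZMod 11 × ZMod 11 => (l * (p.1 - c.1), l * (p.2 - c.2)) := by
    rintro ⟨x, y⟩ ⟨x', y'⟩ h
    rw [Prod.mk.injEq] at h
    obtain ⟨h1, h2⟩ := h
    exact Prod.ext (sub_left_injective (mul_left_cancel₀ hl h1))
      (sub_left_injective (mul_left_cancel₀ hl h2))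
  refine ⟨U.image _, Finset.card_image_of_injective _ hinj,
    fun g => Finset.sum_image hinj.injOn, fun s => ?_⟩
  refine ⟨(Equiv.mulLeft₀ l⁻¹ (inv_ne_zero hl)).trans (Equiv.addRight (coord s c)), fun t => ?_⟩
  rw [lineCard, lineCard, Finset.filter_image, Finset.card_image_of_injective _ hinj]
  congr 1
  refine Finset.filter_congr fun p _ => ?_
  have hc : coord s (l * (p.1 - c.1), l * (p.2 - c.2)) = l * (coord s p - coord s c) := by
    cases s <;> simp only [coord, Option.elim]
    ring
  rw [hc]
  change _ ↔ coord s p = l⁻¹ * t + coord s c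
  rw [← sub_eq_iff_eq_add, inv_mul_eq_div, eq_div_iff hl, mul_comm]

theorem exists_normalized (U : Finset (ZMod 11 × ZMod 11)) (hU : U.card = 13)
    (hinf : IsFull U none) : ∃ V : Finset (ZMod 11 × ZMod 11), V.card = 13 ∧
      ∑ p ∈ V, p.1 = 0 ∧ ∑ p ∈ V, p.2 = 0 ∧ moment V none 2 = 2 ∧
      ∀ s, ∃ e : ZMod 11 ≃ ZMod 11, ∀ t, lineCard V s t = lineCard U s (e t) := by
  obtain ⟨V, hV, hVsum, hVe⟩ := exists_homothety U one_ne_zero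
    (6 * ∑ p ∈ U, p.1, 6 * ∑ p ∈ U, p.2)
  have h11 : (11 : ZMod 11) = 0 := by decide
  have hx : ∑ p ∈ V, p.1 = 0 := by
    rw [hVsum]
    simp only [one_mul, Finset.sum_sub_distrib, Finset.sum_const, hU, nsmul_eq_mul]
    push_cast
    linear_combination -7 * (∑ p ∈ U, p.1) * h11
  have hy : ∑ p ∈ V, p.2 = 0 := by
    rw [hVsum]
    simp only [one_mul, Finset.sum_sub_distrib, Finset.sum_const, hU, nsmul_eq_mul]
    push_cast
    linear_combination -7 * (∑ p ∈ U, p.2) * h11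
  have hVfull : IsFull V none := by
    obtain ⟨e, he⟩ := hVe none
    intro t
    rw [he]
    exact hinf _
  obtain ⟨u, hu, hu2, -⟩ := hVfull.exists_moment (hV.trans hU) (by simpa [moment, coord] using hx)
  obtain ⟨W, hW, hWsum, hWe⟩ := exists_homothety V (inv_ne_zero hu) 0
  refine ⟨W, hW.trans (hV.trans hU), ?_, ?_, ?_, fun s => ?_⟩
  · rw [hWsum]
    simp [← Finset.mul_sum, hx]
  · rw [hWsum]
    simp [← Finset.mul_sum, hy]
  · rw [moment, hWsum]
    have hu2' : ∑ p ∈ V, p.1 ^ 2 = 2 * u ^ 2 := hu2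
    simp only [coord, Option.elim, Prod.fst_zero, sub_zero, mul_pow, ← Finset.mul_sum, hu2']
    field_simp
  · obtain ⟨e, he⟩ := hWe s
    obtain ⟨e', he'⟩ := hVe s
    exact ⟨e.trans e', fun t => (he t).trans (he' _)⟩

theorem IsFull.congr {U V : Finset (ZMod 11 × ZMod 11)} {s : Option (ZMod 11)} (h : IsFull U s)
    (e : ∃ e : ZMod 11 ≃ ZMod 11, ∀ t, lineCard V s t = lineCard U s (e t)) : IsFull V s := by
  obtain ⟨e, he⟩ := e
  intro t
  rw [he]
  exact h _

/-- There is no set of 13 points of the affine plane of order 11 with three full directions in which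
the lines of other directions meet it in 0, 2 or 3 points, at most one of them in 3. -/
theorem false_of_three_full (U : Finset (ZMod 11 × ZMod 11)) (hU : U.card = 13)
    (hinf : IsFull U none) (h0 : IsFull U (some 0)) (h1 : IsFull U (some 1))
    (h : ∀ s : ZMod 11, s ≠ 0 → s ≠ 1 → ∀ t, lineCard U (some s) t ∈ [0, 2, 3])
    (h3 : ∀ s : ZMod 11, s ≠ 0 → s ≠ 1 → ∀ t t', lineCard U (some s) t = 3 →
      lineCard U (some s) t' = 3 → t = t') : False := by
  obtain ⟨V, hV, hx, hy, hx2, hVe⟩ := exists_normalized U hU hinf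
  refine not_centered_three V hV hx hy hx2 (hinf.congr (hVe _)) (h0.congr (hVe _))
    (h1.congr (hVe _)) (fun s hs0 hs1 t => ?_) (fun s hs0 hs1 t t' ht ht' => ?_)
  · obtain ⟨e, he⟩ := hVe (some s)
    rw [he]
    exact h s hs0 hs1 _
  · obtain ⟨e, he⟩ := hVe (some s)
    rw [he] at ht ht'
    exact e.injective (h3 s hs0 hs1 _ _ ht ht')

/-- There is no set of 13 points of the affine plane of order 11 with four full directions in which
the lines of other directions meet it in 0, 2, 3 or 5 points. -/
theorem false_of_four_full (U : Finset (ZMod 11 × ZMod 11)) (hU : U.card = 13)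
    (hinf : IsFull U none) (h0 : IsFull U (some 0)) (h1 : IsFull U (some 1))
    {r : ZMod 11} (hr0 : r ≠ 0) (hr1 : r ≠ 1) (hr : IsFull U (some r))
    (h : ∀ s : ZMod 11, s ≠ 0 → s ≠ 1 → s ≠ r → ∀ t, lineCard U (some s) t ∈ [0, 2, 3, 5]) :
    False := by
  obtain ⟨V, hV, hx, hy, hx2, hVe⟩ := exists_normalized U hU hinf
  refine not_centered_four V hV hx hy hx2 (hinf.congr (hVe _)) (h0.congr (hVe _))
    (h1.congr (hVe _)) hr0 hr1 (hr.congr (hVe _)) fun s hs0 hs1 hsr t => ?_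
  obtain ⟨e, he⟩ := hVe (some s)
  rw [he]
  exact h s hs0 hs1 hsr _

end AffinePlaneEleven

namespace ProjectivePlaneCounting

open Configuration ProjectivePlane
open scoped Classical

/-- The number of points of `S` on the line `l`. -/
noncomputable def secant {P L : Type*} [Membership P L] (S : Finset P) (l : L) : ℕ :=
  (S.filter (· ∈ l)).card

/-- The number of lines through `Q` that meet `S` in an odd number of points. -/
noncomputable def oddLines {P L : Type*} [Membership P L] [Fintype L] (S : Finset P) (Q : P) : ℕ :=
  ∑ l : L with Q ∈ l, secant S l % 2

variable {P L : Type*} [Membership P L] [Fintype P] [Fintype L]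

omit [Fintype P] in
theorem sum_secant_mul (S : Finset P) (g : L → ℕ) :
    ∑ l, secant S l * g l = ∑ p ∈ S, ∑ l with p ∈ l, g l := by
  simp only [secant, Finset.card_filter, Finset.sum_mul, Finset.sum_filter]
  rw [Finset.sum_comm]
  simp

variable [ProjectivePlane P L]

theorem card_lines_through (ho : order P L = 11) (Q : P) :
    (Finset.univ.filter fun l : L => Q ∈ l).card = 12 := by
  have h := lineCount_eq (L := L) Q
  rw [ho, lineCount, Nat.card_eq_fintype_card, Fintype.card_subtype] at h
  exact h

theorem card_points_on (ho : order P L = 11) (l : L) :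
    (Finset.univ.filter fun p : P => p ∈ l).card = 12 := by
  have h := pointCount_eq P l
  rw [ho, pointCount, Nat.card_eq_fintype_card, Fintype.card_subtype] at h
  exact h

omit [Fintype P] in
theorem card_lines_through_two {p q : P} (h : p ≠ q) :
    (Finset.univ.filter fun l : L => p ∈ l ∧ q ∈ l).card = 1 := by
  obtain ⟨l, hl, huniq⟩ := HasLines.existsUnique_line P L p q h
  refine Finset.card_eq_one.2 ⟨l, Finset.ext fun l' => ?_⟩
  simp only [Finset.mem_filter, Finset.mem_univ, true_and, Finset.mem_singleton]
  exact ⟨huniq l', by rintro rfl; exact hl⟩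

omit [Fintype L] in
theorem card_points_on_two {l m : L} (h : l ≠ m) :
    (Finset.univ.filter fun p : P => p ∈ l ∧ p ∈ m).card = 1 := by
  obtain ⟨p, hp, huniq⟩ := HasPoints.existsUnique_point P L l m h
  refine Finset.card_eq_one.2 ⟨p, Finset.ext fun p' => ?_⟩
  simp only [Finset.mem_filter, Finset.mem_univ, true_and, Finset.mem_singleton]
  exact ⟨huniq p', by rintro rfl; exact hp⟩

theorem sum_secant (ho : order P L = 11) (S : Finset P) (Q : P) :
    ∑ l : L with Q ∈ l, secant S l = S.card + if Q ∈ S then 11 else 0 := by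
  have h : ∀ p ∈ S, (∑ l : L with Q ∈ l, if p ∈ l then 1 else 0) = 1 + if p = Q then 11 else 0 := by
    intro p _
    rw [← Finset.sum_filter, Finset.filter_filter, ← Finset.card_eq_sum_ones]
    split_ifs with hpq
    · subst hpq
      simp only [and_self]
      exact card_lines_through ho p
    · exact card_lines_through_two (Ne.symm hpq)
  simp only [secant, Finset.card_filter]
  rw [Finset.sum_comm, Finset.sum_congr rfl h, Finset.sum_add_distrib]
  simp

theorem secant_add_secant_compl (ho : order P L = 11) (S : Finset P) (l : L) :
    secant S l + secant Sᶜ l = 12 := by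
  rw [← card_points_on ho l, secant, secant, ← Finset.card_union_of_disjoint]
  · rw [← Finset.filter_union, Finset.union_compl]
  · exact Finset.disjoint_filter_filter disjoint_compl_right

omit [Fintype P] [ProjectivePlane P L] in
theorem sum_oddLines (S T : Finset P) :
    ∑ p ∈ T, oddLines (L := L) S p = ∑ l : L, secant T l * (secant S l % 2) :=
  (sum_secant_mul T fun l => secant S l % 2).symm

theorem oddLines_mod_two (ho : order P L = 11) (S : Finset P) (Q : P) :
    oddLines (L := L) S Q % 2 = (S.card + if Q ∈ S then 11 else 0) % 2 := by
  rw [← sum_secant (L := L) ho S Q, oddLines, ← Finset.sum_nat_mod]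

theorem sum_oddLines_sq (ho : order P L = 11) (S : Finset P) :
    ∑ Q, oddLines (L := L) S Q ^ 2 =
      (∑ l : L, secant S l % 2) ^ 2 + 11 * ∑ l : L, secant S l % 2 := by
  have h1 : ∀ l : L, ∑ Q : P with Q ∈ l, oddLines (L := L) S Q =
      (∑ m : L, secant S m % 2) + 11 * (secant S l % 2) := by
    intro l
    rw [sum_oddLines]
    have : ∀ m : L, secant (Finset.univ.filter fun Q : P => Q ∈ l) m * (secant S m % 2) =
        secant S m % 2 + if m = l then 11 * (secant S m % 2) else 0 := by
      intro m
      rw [secant, Finset.filter_filter]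
      split_ifs with h
      · subst h
        simp only [and_self]
        rw [card_points_on ho m]
        ring
      · rw [card_points_on_two (Ne.symm h)]
        ring
    rw [Finset.sum_congr rfl fun m _ => this m, Finset.sum_add_distrib]
    simp
  have h2 : ∑ Q, oddLines (L := L) S Q ^ 2 =
      ∑ l : L, (secant S l % 2) * ∑ Q : P with Q ∈ l, oddLines (L := L) S Q := by
    simp only [Finset.mul_sum, Finset.sum_filter]
    rw [Finset.sum_comm]
    refine Finset.sum_congr rfl fun Q _ => ?_
    rw [sq]
    nth_rw 1 [oddLines]
    simp only [Finset.sum_mul, Finset.sum_filter, mul_ite, mul_zero, ite_mul, zero_mul]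
  rw [h2]
  simp only [h1, mul_add, Finset.sum_add_distrib, ← Finset.sum_mul]
  rw [sq, Finset.mul_sum (Finset.univ) _ 11]
  congr 1
  refine Finset.sum_congr rfl fun l _ => ?_
  rcases Nat.mod_two_eq_zero_or_one (secant S l) with h | h <;> simp [h]

/-- The number of lines that meet `S` in exactly `i` points. -/
noncomputable def secantCount (L : Type*) [Membership P L] [Fintype L] (S : Finset P) (i : ℕ) : ℕ :=
  (Finset.univ.filter fun l : L => secant S l = i).card

omit [Fintype P] [ProjectivePlane P L] in
theorem sum_comp_secant (S : Finset P) {N : ℕ} (hN : ∀ l : L, secant S l < N) (h : ℕ → ℕ) :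
    ∑ l : L, h (secant S l) = ∑ i ∈ Finset.range N, secantCount L S i * h i := by
  rw [← Finset.sum_fiberwise_of_maps_to (g := secant S) (t := Finset.range N)
    fun l _ => Finset.mem_range.2 (hN l)]
  refine Finset.sum_congr rfl fun i _ => ?_
  rw [Finset.sum_congr rfl fun l hl => by rw [(Finset.mem_filter.1 hl).2], Finset.sum_const,
    smul_eq_mul, secantCount]

section NoTangents

variable {S : Finset P} (hS : ∀ l : L, secant S l ≠ 1)
include hS

omit [Fintype P] [Fintype L] [ProjectivePlane P L] in
theorem two_le_secant {p : P} {l : L} (hp : p ∈ S) (hl : p ∈ l) : 2 ≤ secant S l := by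
  have h : secant S l ≠ 0 := Finset.card_ne_zero.2 ⟨p, Finset.mem_filter.2 ⟨hp, hl⟩⟩
  have := hS l
  omega

theorem sum_secant_sub_two (ho : order P L = 11) {p : P} (hp : p ∈ S) :
    (∑ l : L with p ∈ l, (secant S l - 2)) + 13 = S.card := by
  have h1 := sum_secant (L := L) ho S p
  rw [if_pos hp] at h1
  have h2 : ∑ l : L with p ∈ l, secant S l = ∑ l : L with p ∈ l, ((secant S l - 2) + 2) :=
    Finset.sum_congr rfl fun l hl => by
      have := two_le_secant hS hp (Finset.mem_filter.1 hl).2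
      omega
  rw [h2, Finset.sum_add_distrib, Finset.sum_const, card_lines_through ho] at h1
  simp only [smul_eq_mul] at h1
  omega

theorem secant_add_eleven_le (ho : order P L = 11) {l : L} (hl : secant S l ≠ 0) :
    secant S l + 11 ≤ S.card := by
  obtain ⟨p, hp⟩ := Finset.card_ne_zero.1 hl
  obtain ⟨hp, hpl⟩ := Finset.mem_filter.1 hp
  have h1 := sum_secant_sub_two hS ho hp
  have h2 := Finset.single_le_sum (s := Finset.univ.filter fun l : L => p ∈ l)
    (f := fun l : L => secant S l - 2) (fun _ _ => Nat.zero_le _)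
    (Finset.mem_filter.2 ⟨Finset.mem_univ l, hpl⟩)
  have h3 := two_le_secant hS hp hpl
  omega

theorem sum_secant_mul_secant_sub_two (ho : order P L = 11) :
    ∑ l : L, secant S l * (secant S l - 2) = S.card * (S.card - 13) := by
  rw [sum_secant_mul S fun l => secant S l - 2, ← smul_eq_mul, ← Finset.sum_const]
  refine Finset.sum_congr rfl fun p hp => ?_
  have := sum_secant_sub_two hS ho hp
  omega

omit [Fintype P] [ProjectivePlane P L] in
theorem secantCount_one : secantCount L S 1 = 0 :=
  Finset.card_eq_zero.2 (Finset.filter_eq_empty_iff.2 fun l _ => hS l)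

theorem secant_lt_seven (ho : order P L = 11) (hk : S.card ≤ 17) (l : L) : secant S l < 7 := by
  by_cases hl : secant S l = 0
  · omega
  · have := secant_add_eleven_le hS ho hl
    omega

theorem secantCount_eq (ho : order P L = 11) (hk : S.card ≤ 17) :
    3 * secantCount L S 3 + 8 * secantCount L S 4 + 15 * secantCount L S 5 +
      24 * secantCount L S 6 = S.card * (S.card - 13) := by
  rw [← sum_secant_mul_secant_sub_two hS ho,
    sum_comp_secant S (secant_lt_seven hS ho hk) fun i => i * (i - 2)]
  simp only [Finset.sum_range_succ, Finset.sum_range_zero]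
  omega

theorem secantCount_eq_zero (ho : order P L = 11) {i : ℕ} (hi : i ≠ 0) (hik : S.card < i + 11) :
    secantCount L S i = 0 := by
  refine Finset.card_eq_zero.2 (Finset.filter_eq_empty_iff.2 fun l _ hl => ?_)
  have := secant_add_eleven_le hS ho (l := l) (by omega)
  omega

theorem sum_secant_mod_two (ho : order P L = 11) (hk : S.card ≤ 17) :
    ∑ l : L, secant S l % 2 = secantCount L S 3 + secantCount L S 5 := by
  rw [sum_comp_secant S (secant_lt_seven hS ho hk) fun i => i % 2]
  simp only [Finset.sum_range_succ, Finset.sum_range_zero, secantCount_one hS]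
  omega

theorem sum_oddLines_self (ho : order P L = 11) (hk : S.card ≤ 17) :
    ∑ Q ∈ S, oddLines (L := L) S Q = 3 * secantCount L S 3 + 5 * secantCount L S 5 := by
  rw [sum_oddLines, sum_comp_secant S (secant_lt_seven hS ho hk) fun i => i * (i % 2)]
  simp only [Finset.sum_range_succ, Finset.sum_range_zero, secantCount_one hS]
  omega

theorem sum_oddLines_compl (ho : order P L = 11) (hk : S.card ≤ 17) :
    ∑ Q ∈ Sᶜ, oddLines (L := L) S Q = 9 * secantCount L S 3 + 7 * secantCount L S 5 := by
  have h : ∀ l : L, secant Sᶜ l = 12 - secant S l := fun l => by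
    have := secant_add_secant_compl ho S l
    omega
  simp only [sum_oddLines, h]
  rw [sum_comp_secant S (secant_lt_seven hS ho hk) fun i => (12 - i) * (i % 2)]
  simp only [Finset.sum_range_succ, Finset.sum_range_zero, secantCount_one hS]
  omega

theorem card_compl_le_of_odd (ho : order P L = 11) (hk : S.card ≤ 17) (hodd : S.card % 2 = 1) :
    133 - S.card ≤ 9 * secantCount L S 3 + 7 * secantCount L S 5 := by
  have hP : Fintype.card P = 133 := by rw [card_points P L, ho]; norm_num
  rw [← sum_oddLines_compl hS ho hk, ← hP, ← Finset.card_compl, Finset.card_eq_sum_ones]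
  refine Finset.sum_le_sum fun Q hQ => ?_
  have h := oddLines_mod_two (L := L) ho S Q
  rw [if_neg (Finset.mem_compl.1 hQ), add_zero, hodd] at h
  omega

theorem sixteen_le_card (ho : order P L = 11) (hne : S.Nonempty) : 16 ≤ S.card := by
  obtain ⟨p, hp⟩ := hne
  have h13 := sum_secant_sub_two hS ho hp
  by_contra! hlt
  have h1 := secantCount_eq hS ho (by omega)
  have h2 := card_compl_le_of_odd hS ho (by omega)
  have h3 := fun i h => secantCount_eq_zero (i := i) hS ho h
  obtain h | h | h : S.card = 13 ∨ S.card = 14 ∨ S.card = 15 := by omega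
  all_goals
    rw [h] at h1 h2 h3
    have h4 := h3 4 (by norm_num)
    have h5 := h3 5 (by norm_num)
    have h6 := h3 6 (by norm_num)
    norm_num at h1 h2 h4 h5 h6
    try omega

theorem card_seventeen (ho : order P L = 11) (hk : S.card = 17) :
    ∃ l : L, secant S l = 4 ∧ ∀ m, m ≠ l → secant S m ∈ [0, 2, 3, 5] := by
  have h1 := secantCount_eq hS ho (by omega)
  have h2 := card_compl_le_of_odd hS ho (by omega) (by omega)
  rw [hk] at h1 h2
  norm_num at h1 h2
  have h4 : secantCount L S 4 = 1 := by omega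
  have h6 : secantCount L S 6 = 0 := by omega
  obtain ⟨l, hl⟩ := Finset.card_eq_one.1 h4
  have hmem : ∀ m : L, secant S m = 4 ↔ m = l := fun m => by
    rw [← Finset.mem_singleton (a := l), ← hl]
    simp
  refine ⟨l, (hmem l).2 rfl, fun m hm => ?_⟩
  have e1 := hS m
  have e4 := mt (hmem m).1 hm
  have e6 : secant S m ≠ 6 := Finset.filter_eq_empty_iff.1 (Finset.card_eq_zero.1 h6) (by simp)
  have e7 := secant_lt_seven hS ho (by omega) m
  simp only [List.mem_cons, List.not_mem_nil, or_false]
  omega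

theorem card_sixteen (ho : order P L = 11) (hk : S.card = 16) :
    (∃ l : L, secant S l = 3) ∧ (∀ l : L, secant S l ∈ [0, 2, 3]) ∧
      ∀ Q ∉ S, oddLines (L := L) S Q ≤ 2 := by
  have h1 := secantCount_eq hS ho (by omega)
  have h6 := secantCount_eq_zero (i := 6) hS ho (by omega) (by omega)
  have hN := sum_secant_mod_two hS ho (by omega)
  have hon := sum_oddLines_self hS ho (by omega)
  have hoff := sum_oddLines_compl hS ho (by omega)
  have hsq := sum_oddLines_sq (L := L) ho S
  rw [hN] at hsq
  rw [hk, h6] at h1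
  have hcompl := Finset.sum_add_sum_compl S fun Q => ((oddLines (L := L) S Q : ℕ) : ℤ) ^ 2
  have hone : ∀ Q ∈ S, 1 ≤ oddLines (L := L) S Q := fun Q hQ => by
    have h := oddLines_mod_two (L := L) ho S Q
    rw [if_pos hQ, hk] at h
    omega
  have hge : 16 ≤ 3 * secantCount L S 3 + 5 * secantCount L S 5 := by
    rw [← hon, ← hk, Finset.card_eq_sum_ones]
    exact Finset.sum_le_sum hone
  have hSnonneg : ∀ Q ∈ S,
      (0 : ℤ) ≤ ((oddLines (L := L) S Q : ℤ) - 1) * (oddLines (L := L) S Q - 3) := by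
    intro Q hQ
    have h := oddLines_mod_two (L := L) ho S Q
    rw [if_pos hQ, hk] at h
    obtain h | h : oddLines (L := L) S Q = 1 ∨ 3 ≤ oddLines (L := L) S Q := by omega
    · rw [h]; norm_num
    · exact mul_nonneg (by omega) (by omega)
  have hCnonneg : ∀ Q ∈ Sᶜ,
      (0 : ℤ) ≤ (oddLines (L := L) S Q : ℤ) * (oddLines (L := L) S Q - 2) := by
    intro Q hQ
    have h := oddLines_mod_two (L := L) ho S Q
    rw [if_neg (Finset.mem_compl.1 hQ), hk] at h
    obtain h | h : oddLines (L := L) S Q = 0 ∨ 2 ≤ oddLines (L := L) S Q := by omega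
    · rw [h]; norm_num
    · exact mul_nonneg (by omega) (by omega)
  have hSsum := Finset.sum_nonneg hSnonneg
  have hCsum := Finset.sum_nonneg hCnonneg
  have eS : ∑ Q ∈ S, ((oddLines (L := L) S Q : ℤ) - 1) * (oddLines (L := L) S Q - 3) =
      ∑ Q ∈ S, (oddLines (L := L) S Q : ℤ) ^ 2 -
        4 * ((∑ Q ∈ S, oddLines (L := L) S Q : ℕ) : ℤ) + 48 := by
    have : (48 : ℤ) = ∑ Q ∈ S, 3 := by simp [hk]
    rw [this]
    push_cast
    rw [Finset.mul_sum, ← Finset.sum_sub_distrib, ← Finset.sum_add_distrib]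
    exact Finset.sum_congr rfl fun Q _ => by ring
  have eC : ∑ Q ∈ Sᶜ, (oddLines (L := L) S Q : ℤ) * (oddLines (L := L) S Q - 2) =
      ∑ Q ∈ Sᶜ, (oddLines (L := L) S Q : ℤ) ^ 2 -
        2 * ((∑ Q ∈ Sᶜ, oddLines (L := L) S Q : ℕ) : ℤ) := by
    push_cast
    rw [Finset.mul_sum, ← Finset.sum_sub_distrib]
    exact Finset.sum_congr rfl fun Q _ => by ring
  rw [hon] at eS
  rw [hoff] at eC
  have hsq' : ∑ Q, (oddLines (L := L) S Q : ℤ) ^ 2 =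
      (secantCount L S 3 + secantCount L S 5 : ℤ) ^ 2 +
        11 * (secantCount L S 3 + secantCount L S 5) := by exact_mod_cast hsq
  rw [hsq'] at hcompl
  push_cast at eS eC
  have hfactor : (4 * secantCount L S 5 : ℤ) ≤
      (secantCount L S 3 + secantCount L S 5 - 3) *
        (secantCount L S 3 + secantCount L S 5 - 16) := by
    nlinarith
  have e35 : secantCount L S 3 + secantCount L S 5 = 16 := by
    by_contra hne
    have : (0 : ℤ) < (secantCount L S 3 + secantCount L S 5 - 3) *
        (16 - (secantCount L S 3 + secantCount L S 5)) := mul_pos (by omega) (by omega)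
    nlinarith
  have e5 : secantCount L S 5 = 0 := by
    rw [show (secantCount L S 3 + secantCount L S 5 - 16 : ℤ) = 0 by omega, mul_zero] at hfactor
    omega
  have e3 : secantCount L S 3 = 16 := by omega
  have e4 : secantCount L S 4 = 0 := by omega
  rw [e3, e5] at hcompl eS eC
  refine ⟨?_, fun l => ?_, fun Q hQ => ?_⟩
  · obtain ⟨l, hl⟩ := Finset.card_pos.1 (show 0 < secantCount L S 3 by omega)
    exact ⟨l, (Finset.mem_filter.1 hl).2⟩
  · have f1 := hS l
    have f4 : secant S l ≠ 4 := Finset.filter_eq_empty_iff.1 (Finset.card_eq_zero.1 e4) (by simp)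
    have f5 : secant S l ≠ 5 := Finset.filter_eq_empty_iff.1 (Finset.card_eq_zero.1 e5) (by simp)
    have f6 : secant S l ≠ 6 := Finset.filter_eq_empty_iff.1 (Finset.card_eq_zero.1 h6) (by simp)
    have f7 := secant_lt_seven hS ho (by omega) l
    simp only [List.mem_cons, List.not_mem_nil, or_false]
    omega
  · have hQ' := Finset.single_le_sum hCnonneg (Finset.mem_compl.2 hQ)
    have : (oddLines (L := L) S Q : ℤ) * (oddLines (L := L) S Q - 2) ≤ 0 := by
      push_cast at *
      linarith
    by_contra! h
    nlinarith

end NoTangents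

end ProjectivePlaneCounting

open AffinePlaneEleven in
/-- Affine coordinates over `ZMod 11` on the complement of the line `infinity`. -/
structure AffineFrame {P L : Type*} [Membership P L] (infinity : L) where
  /-- The point with given coordinates. -/
  point : ZMod 11 × ZMod 11 → P
  /-- The point at infinity of the lines of given slope. -/
  direction : Option (ZMod 11) → P
  /-- The line of points with a given value of a coordinate. -/
  line : Option (ZMod 11) → ZMod 11 → L
  point_notMem : ∀ p, point p ∉ infinity
  direction_mem : ∀ s, direction s ∈ infinity
  direction_mem_line : ∀ s t, direction s ∈ line s t
  point_mem_line : ∀ s t p, point p ∈ line s t ↔ coord s p = t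

namespace AffineFrame

open Configuration ProjectivePlane ProjectivePlaneCounting AffinePlaneEleven
open scoped Classical

variable {P L : Type*} [Membership P L] {infinity : L}

theorem point_injective (A : AffineFrame (P := P) infinity) : Function.Injective A.point := by
  intro p q h
  have h1 := (A.point_mem_line none p.1 p).2 rfl
  have h2 := (A.point_mem_line (some 0) (coord (some 0) p) p).2 rfl
  rw [h, A.point_mem_line] at h1 h2
  simp only [coord, Option.elim, zero_mul, sub_zero] at h1 h2
  exact Prod.ext h1.symm h2.symm

theorem exists_coord_eq (s : Option (ZMod 11)) (t : ZMod 11) : ∃ p, coord s p = t := by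
  cases s with
  | none => exact ⟨(t, 0), rfl⟩
  | some s => exact ⟨(0, t), by simp [coord]⟩

theorem exists_coord_zero_ne_zero {s s' : Option (ZMod 11)} (h : s ≠ s') :
    ∃ p, coord s p = 0 ∧ coord s' p ≠ 0 := by
  cases s with
  | none =>
    cases s' with
    | none => exact absurd rfl h
    | some s' => exact ⟨(0, 1), rfl, by simp [coord]⟩
  | some s =>
    refine ⟨(1, s), by simp [coord], ?_⟩
    cases s' with
    | none => simp [coord]
    | some s' =>
      simp only [coord, Option.elim, mul_one]
      exact sub_ne_zero.2 fun h' => h (congrArg some h')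

theorem line_ne_infinity (A : AffineFrame (P := P) infinity) (s : Option (ZMod 11)) (t : ZMod 11) :
    A.line s t ≠ infinity := by
  obtain ⟨p, hp⟩ := exists_coord_eq s t
  intro h
  have hmem := (A.point_mem_line s t p).2 hp
  rw [h] at hmem
  exact A.point_notMem p hmem

theorem line_injective (A : AffineFrame (P := P) infinity) (s : Option (ZMod 11)) :
    Function.Injective (A.line s) := by
  intro t t' h
  obtain ⟨p, hp⟩ := exists_coord_eq s t
  have h1 := (A.point_mem_line s t p).2 hp
  rw [h, A.point_mem_line] at h1
  exact hp.symm.trans h1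

variable [ProjectivePlane P L]

theorem direction_injective (A : AffineFrame (P := P) infinity) :
    Function.Injective A.direction := by
  intro s s' h
  by_contra hne
  have h0 : ∀ s, A.point (0, 0) ∈ A.line s 0 := fun s => by
    rw [A.point_mem_line]
    cases s <;> simp [coord]
  have hs := A.direction_mem_line s 0
  rw [h] at hs
  rcases Nondegenerate.eq_or_eq hs (h0 s) (A.direction_mem_line s' 0) (h0 s') with h1 | h1
  · exact A.point_notMem _ (h1 ▸ A.direction_mem s')
  · obtain ⟨p, hp, hp'⟩ := exists_coord_zero_ne_zero hne
    rw [← A.point_mem_line, h1, A.point_mem_line] at hp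
    exact hp' hp

variable [Fintype P] [Fintype L]

theorem exists_direction_eq (A : AffineFrame (P := P) infinity) (ho : order P L = 11) {p : P}
    (hp : p ∈ infinity) : ∃ s, A.direction s = p := by
  have h : Finset.univ.image A.direction = Finset.univ.filter fun p : P => p ∈ infinity := by
    refine Finset.eq_of_subset_of_card_le (fun q hq => ?_) ?_
    · obtain ⟨s, -, rfl⟩ := Finset.mem_image.1 hq
      exact Finset.mem_filter.2 ⟨Finset.mem_univ _, A.direction_mem s⟩
    · rw [card_points_on ho, Finset.card_image_of_injective _ A.direction_injective,
        Finset.card_univ, Fintype.card_option, ZMod.card]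
  have hp' : p ∈ Finset.univ.image A.direction := by
    rw [h]
    exact Finset.mem_filter.2 ⟨Finset.mem_univ _, hp⟩
  obtain ⟨s, -, hs⟩ := Finset.mem_image.1 hp'
  exact ⟨s, hs⟩

theorem exists_point_eq (A : AffineFrame (P := P) infinity) (ho : order P L = 11) {p : P}
    (hp : p ∉ infinity) : ∃ q, A.point q = p := by
  have h : Finset.univ.image A.point = Finset.univ.filter fun p : P => p ∉ infinity := by
    refine Finset.eq_of_subset_of_card_le (fun q hq => ?_) ?_
    · obtain ⟨s, -, rfl⟩ := Finset.mem_image.1 hq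
      exact Finset.mem_filter.2 ⟨Finset.mem_univ _, A.point_notMem s⟩
    · have h1 := Finset.card_filter_add_card_filter_not (s := (Finset.univ : Finset P))
        fun p => p ∈ infinity
      rw [card_points_on ho, Finset.card_univ, card_points P L, ho] at h1
      rw [Finset.card_image_of_injective _ A.point_injective, Finset.card_univ, Fintype.card_prod,
        ZMod.card]
      omega
  have hp' : p ∈ Finset.univ.image A.point := by
    rw [h]
    exact Finset.mem_filter.2 ⟨Finset.mem_univ _, hp⟩
  obtain ⟨s, -, hs⟩ := Finset.mem_image.1 hp'
  exact ⟨s, hs⟩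

/-- The coordinates of the affine points of a set. -/
noncomputable def trace (A : AffineFrame (P := P) infinity) (S : Finset P) :
    Finset (ZMod 11 × ZMod 11) :=
  Finset.univ.filter fun p => A.point p ∈ S

theorem card_trace_add_secant (A : AffineFrame (P := P) infinity) (ho : order P L = 11)
    (S : Finset P) : (A.trace S).card + secant S infinity = S.card := by
  have h : (A.trace S).image A.point = S.filter fun p => p ∉ infinity := by
    ext p
    simp only [trace, Finset.mem_image, Finset.mem_filter, Finset.mem_univ, true_and]
    constructor
    · rintro ⟨q, hq, rfl⟩
      exact ⟨hq, A.point_notMem q⟩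
    · rintro ⟨hp, hpi⟩
      obtain ⟨q, rfl⟩ := A.exists_point_eq ho hpi
      exact ⟨q, hp, rfl⟩
  rw [← Finset.card_image_of_injective _ A.point_injective, h, secant, add_comm,
    Finset.card_filter_add_card_filter_not]

theorem secant_line (A : AffineFrame (P := P) infinity) (ho : order P L = 11) (S : Finset P)
    (s : Option (ZMod 11)) (t : ZMod 11) :
    secant S (A.line s t) = lineCard (A.trace S) s t + if A.direction s ∈ S then 1 else 0 := by
  have h1 : (S.filter (· ∈ A.line s t)).filter (· ∉ infinity) =
      ((A.trace S).filter fun p => coord s p = t).image A.point := by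
    ext p
    simp only [trace, Finset.mem_image, Finset.mem_filter, Finset.mem_univ, true_and]
    constructor
    · rintro ⟨⟨hp, hpl⟩, hpi⟩
      obtain ⟨q, rfl⟩ := A.exists_point_eq ho hpi
      exact ⟨q, ⟨hp, (A.point_mem_line s t q).1 hpl⟩, rfl⟩
    · rintro ⟨q, ⟨hq, hc⟩, rfl⟩
      exact ⟨⟨hq, (A.point_mem_line s t q).2 hc⟩, A.point_notMem q⟩
  have h2 : (S.filter (· ∈ A.line s t)).filter (· ∈ infinity) = S.filter (· = A.direction s) := by
    ext p
    simp only [Finset.mem_filter]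
    constructor
    · rintro ⟨⟨hp, hpl⟩, hpi⟩
      refine ⟨hp, ?_⟩
      exact (Nondegenerate.eq_or_eq hpl (A.direction_mem_line s t) hpi
        (A.direction_mem s)).resolve_right (A.line_ne_infinity s t)
    · rintro ⟨hp, rfl⟩
      exact ⟨⟨hp, A.direction_mem_line s t⟩, A.direction_mem s⟩
  rw [secant, ← Finset.card_filter_add_card_filter_not (fun p => p ∈ infinity), h1, h2,
    Finset.card_image_of_injective _ A.point_injective, add_comm, lineCard]
  congr 1
  split_ifs with hs
  · refine Finset.card_eq_one.2 ⟨A.direction s, ?_⟩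
    ext p
    simp only [Finset.mem_filter, Finset.mem_singleton]
    exact ⟨fun h => h.2, fun h => ⟨h ▸ hs, h⟩⟩
  · refine Finset.card_eq_zero.2 (Finset.filter_eq_empty_iff.2 fun p hp h => hs ?_)
    rwa [← h]

theorem isFull_trace (A : AffineFrame (P := P) infinity) (ho : order P L = 11) {S : Finset P}
    {s : Option (ZMod 11)} (hs : A.direction s ∈ S)
    (h : ∀ t, secant S (A.line s t) ≠ 1 ∧ secant S (A.line s t) ≠ 4) : IsFull (A.trace S) s := by
  intro t
  have := A.secant_line ho S s t
  have := h t
  rw [if_pos hs] at *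
  omega

theorem lineCard_trace (A : AffineFrame (P := P) infinity) (ho : order P L = 11) {S : Finset P}
    {s : Option (ZMod 11)} (hs : A.direction s ∉ S) (t : ZMod 11) :
    lineCard (A.trace S) s t = secant S (A.line s t) := by
  rw [A.secant_line ho, if_neg hs, add_zero]

end AffineFrame

section Lines

open Configuration ProjectivePlane ProjectivePlaneCounting AffinePlaneEleven
open scoped Classical

variable {P L : Type*} [Membership P L] [Fintype P] [Fintype L] [ProjectivePlane P L]

theorem card_ne_sixteen (ho : order P L = 11) {S : Finset P} (hS : ∀ l : L, secant S l ≠ 1)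
    (hframe : ∀ (l : L) (p q r : P), p ∈ l → q ∈ l → r ∈ l → p ≠ q → p ≠ r → q ≠ r →
      ∃ A : AffineFrame (P := P) l,
        A.direction none = p ∧ A.direction (some 0) = q ∧ A.direction (some 1) = r) :
    S.card ≠ 16 := by
  intro hk
  obtain ⟨⟨l, hl⟩, hval, hodd⟩ := card_sixteen hS ho hk
  obtain ⟨p, q, r, hpq, hpr, hqr, hpts⟩ := Finset.card_eq_three.1 hl
  have hmem : ∀ x, x ∈ S ∧ x ∈ l ↔ x = p ∨ x = q ∨ x = r := fun x => by
    rw [← Finset.mem_filter, hpts]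
    simp
  have hp := (hmem p).2 (by simp)
  have hq := (hmem q).2 (by simp)
  have hr := (hmem r).2 (by simp)
  obtain ⟨A, h1, h2, h3⟩ := hframe l p q r hp.2 hq.2 hr.2 hpq hpr hqr
  have hne4 : ∀ m : L, secant S m ≠ 1 ∧ secant S m ≠ 4 := fun m => by
    have := hval m
    simp only [List.mem_cons, List.not_mem_nil, or_false] at this
    omega
  have hdir : ∀ s : ZMod 11, s ≠ 0 → s ≠ 1 → A.direction (some s) ∉ S := by
    intro s hs0 hs1 hs
    rcases (hmem _).1 ⟨hs, A.direction_mem _⟩ with h | h | h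
    · rw [← h1] at h
      simpa using A.direction_injective h
    · rw [← h2] at h
      exact hs0 (by simpa using A.direction_injective h)
    · rw [← h3] at h
      exact hs1 (by simpa using A.direction_injective h)
  refine false_of_three_full (A.trace S) ?_ (A.isFull_trace ho (h1 ▸ hp.1) fun t => hne4 _)
    (A.isFull_trace ho (h2 ▸ hq.1) fun t => hne4 _) (A.isFull_trace ho (h3 ▸ hr.1) fun t => hne4 _)
    (fun s hs0 hs1 t => ?_) fun s hs0 hs1 t t' ht ht' => ?_
  · have := A.card_trace_add_secant ho S
    change secant S l = 3 at hl
    omega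
  · rw [A.lineCard_trace ho (hdir s hs0 hs1)]
    exact hval _
  · rw [A.lineCard_trace ho (hdir s hs0 hs1)] at ht ht'
    by_contra hne
    have h2 := hodd _ (hdir s hs0 hs1)
    have hsub : ({l, A.line (some s) t, A.line (some s) t'} : Finset L) ⊆
        Finset.univ.filter fun m => A.direction (some s) ∈ m := by
      intro m hm
      simp only [Finset.mem_insert, Finset.mem_singleton] at hm
      rw [Finset.mem_filter]
      refine ⟨Finset.mem_univ _, ?_⟩
      rcases hm with rfl | rfl | rfl
      · exact A.direction_mem _
      · exact A.direction_mem_line _ _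
      · exact A.direction_mem_line _ _
    have h4 := Finset.sum_le_sum_of_subset (f := fun m => secant S m % 2) hsub
    rw [Finset.sum_insert, Finset.sum_insert, Finset.sum_singleton, ht, ht',
      show secant S l = 3 from hl] at h4
    · unfold oddLines at h2
      omega
    · rw [Finset.mem_singleton]
      exact fun h => hne (A.line_injective _ h)
    · rw [Finset.mem_insert, Finset.mem_singleton, not_or]
      exact ⟨(A.line_ne_infinity _ _).symm, (A.line_ne_infinity _ _).symm⟩

theorem card_ne_seventeen (ho : order P L = 11) {S : Finset P} (hS : ∀ l : L, secant S l ≠ 1)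
    (hframe : ∀ (l : L) (p q r : P), p ∈ l → q ∈ l → r ∈ l → p ≠ q → p ≠ r → q ≠ r →
      ∃ A : AffineFrame (P := P) l,
        A.direction none = p ∧ A.direction (some 0) = q ∧ A.direction (some 1) = r) :
    S.card ≠ 17 := by
  intro hk
  obtain ⟨l, hl, hval⟩ := card_seventeen hS ho hk
  have hl' := hl
  rw [secant, Finset.card_eq_succ] at hl'
  obtain ⟨d, T, hdT, hins, hT⟩ := hl'
  obtain ⟨p, q, r, hpq, hpr, hqr, rfl⟩ := Finset.card_eq_three.1 hT
  have hmem : ∀ x, x ∈ S ∧ x ∈ l ↔ x = d ∨ x = p ∨ x = q ∨ x = r := fun x => by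
    rw [← Finset.mem_filter, ← hins]
    simp
  simp only [Finset.mem_insert, Finset.mem_singleton, not_or] at hdT
  have hd := (hmem d).2 (by simp)
  have hp := (hmem p).2 (by simp)
  have hq := (hmem q).2 (by simp)
  have hr := (hmem r).2 (by simp)
  obtain ⟨A, h1, h2, h3⟩ := hframe l p q r hp.2 hq.2 hr.2 hpq hpr hqr
  obtain ⟨s, h4⟩ := A.exists_direction_eq ho hd.2
  obtain _ | s := s
  · exact hdT.1 (h4.symm.trans h1)
  have hs0 : s ≠ 0 := by
    rintro rfl
    exact hdT.2.1 (h4.symm.trans h2)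
  have hs1 : s ≠ 1 := by
    rintro rfl
    exact hdT.2.2 (h4.symm.trans h3)
  have hne4 : ∀ s t, secant S (A.line s t) ≠ 1 ∧ secant S (A.line s t) ≠ 4 := fun s t => by
    have := hval _ (A.line_ne_infinity s t)
    simp only [List.mem_cons, List.not_mem_nil, or_false] at this
    omega
  refine false_of_four_full (A.trace S) ?_ (A.isFull_trace ho (h1 ▸ hp.1) fun t => hne4 _ _)
    (A.isFull_trace ho (h2 ▸ hq.1) fun t => hne4 _ _)
    (A.isFull_trace ho (h3 ▸ hr.1) fun t => hne4 _ _) hs0 hs1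
    (A.isFull_trace ho (h4 ▸ hd.1) fun t => hne4 _ _) fun a ha0 ha1 has t => ?_
  · have := A.card_trace_add_secant ho S
    omega
  · rw [A.lineCard_trace ho]
    · exact hval _ (A.line_ne_infinity _ _)
    · intro ha
      rcases (hmem _).1 ⟨ha, A.direction_mem _⟩ with h | h | h | h
      · rw [← h4] at h
        exact has (by simpa using A.direction_injective h)
      · rw [← h1] at h
        simpa using A.direction_injective h
      · rw [← h2] at h
        exact ha0 (by simpa using A.direction_injective h)
      · rw [← h3] at h
        exact ha1 (by simpa using A.direction_injective h)

end Lines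

section Coordinates

open Configuration ProjectivePlane ofField Projectivization Matrix AffinePlaneEleven
open scoped LinearAlgebra.Projectivization

variable {K : Type*} [Field K]

theorem ne_zero_of_dotProduct_ne_zero {u v : Fin 3 → K} (h : u ⬝ᵥ v ≠ 0) : u ≠ 0 ∧ v ≠ 0 := by
  constructor
  · rintro rfl
    exact h (zero_dotProduct v)
  · rintro rfl
    exact h (dotProduct_zero u)

theorem exists_dotProduct_ne_zero {v : Fin 3 → K} (hv : v ≠ 0) : ∃ w, w ⬝ᵥ v ≠ 0 := by
  by_contra! h
  exact hv (dotProduct_eq_zero v fun w => by rw [dotProduct_comm]; exact h w)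

/-- Three collinear points have representatives the third of which is the sum of the others. -/
theorem exists_rep_add_eq {l p q r : ℙ K (Fin 3 → K)} (hp : p ∈ l) (hq : q ∈ l) (hr : r ∈ l)
    (hpq : p ≠ q) (hpr : p ≠ r) (hqr : q ≠ r) :
    ∃ (a b : Fin 3 → K) (ha : a ≠ 0) (hb : b ≠ 0) (hab : a + b ≠ 0) (hc : crossProduct a b ≠ 0),
      mk K a ha = q ∧ mk K b hb = p ∧ mk K (a + b) hab = r ∧ mk K _ hc = l := by
  induction p with | h p hp0 =>
  induction q with | h q hq0 =>
  induction r with | h r hr0 =>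
  have hn : crossProduct q p ≠ 0 := fun h =>
    hpq ((mk_eq_mk_iff_crossProduct_eq_zero hq0 hp0).2 h).symm
  have hl : mk K _ hn = l :=
    (eq_or_eq_of_orthogonal ((orthogonal_mk hp0 hn).2 (dot_cross_self _ _))
      ((orthogonal_mk hq0 hn).2 (dot_self_cross _ _)) hp hq).resolve_left hpq
  have hrn : r ⬝ᵥ crossProduct q p = 0 := by
    rw [← hl] at hr
    exact (orthogonal_mk hr0 hn).1 hr
  obtain ⟨w, hw⟩ := exists_dotProduct_ne_zero hn
  have hsum : (w ⬝ᵥ crossProduct r p) • q + (w ⬝ᵥ crossProduct q r) • p =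
      (w ⬝ᵥ crossProduct q p) • r := by
    have key : (w ⬝ᵥ crossProduct r p) • q + (w ⬝ᵥ crossProduct q r) • p =
        (w ⬝ᵥ crossProduct q p) • r - (r ⬝ᵥ crossProduct q p) • w := by
      ext i
      fin_cases i <;> simp [cross_apply, dotProduct, Fin.sum_univ_three] <;> ring
    rw [key, hrn, zero_smul, sub_zero]
  have hα : w ⬝ᵥ crossProduct r p ≠ 0 := fun h => by
    rw [h, zero_smul, zero_add] at hsum
    refine hpr ((mk_eq_mk_iff' K _ _ hr0 hp0).2
      ⟨(w ⬝ᵥ crossProduct q p)⁻¹ * (w ⬝ᵥ crossProduct q r), ?_⟩).symm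
    rw [← smul_smul, hsum, inv_smul_smul₀ hw]
  have hβ : w ⬝ᵥ crossProduct q r ≠ 0 := fun h => by
    rw [h, zero_smul, add_zero] at hsum
    refine hqr ((mk_eq_mk_iff' K _ _ hr0 hq0).2
      ⟨(w ⬝ᵥ crossProduct q p)⁻¹ * (w ⬝ᵥ crossProduct r p), ?_⟩).symm
    rw [← smul_smul, hsum, inv_smul_smul₀ hw]
  refine ⟨(w ⬝ᵥ crossProduct r p) • q, (w ⬝ᵥ crossProduct q r) • p, smul_ne_zero hα hq0,
    smul_ne_zero hβ hp0, hsum ▸ smul_ne_zero hw hr0, ?_, ?_, ?_, ?_, ?_⟩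
  · rw [map_smul, map_smul, LinearMap.smul_apply]
    exact smul_ne_zero hβ (smul_ne_zero hα hn)
  · exact (mk_eq_mk_iff' K _ _ _ hq0).2 ⟨_, rfl⟩
  · exact (mk_eq_mk_iff' K _ _ _ hp0).2 ⟨_, rfl⟩
  · exact (mk_eq_mk_iff' K _ _ _ hr0).2 ⟨_, hsum.symm⟩
  · rw [← hl]
    refine (mk_eq_mk_iff' K _ _ _ hn).2
      ⟨(w ⬝ᵥ crossProduct q r) * (w ⬝ᵥ crossProduct r p), ?_⟩
    rw [map_smul, map_smul, LinearMap.smul_apply, smul_smul]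

theorem exists_affineFrame (e : ZMod 11 ≃+* K) (l p q r : ℙ K (Fin 3 → K)) (hp : p ∈ l)
    (hq : q ∈ l) (hr : r ∈ l) (hpq : p ≠ q) (hpr : p ≠ r) (hqr : q ≠ r) :
    ∃ A : AffineFrame (P := ℙ K (Fin 3 → K)) l,
      A.direction none = p ∧ A.direction (some 0) = q ∧ A.direction (some 1) = r := by
  obtain ⟨a, b, ha, hb, hab, hc, rfl, rfl, rfl, rfl⟩ := exists_rep_add_eq hp hq hr hpq hpr hqr
  obtain ⟨w, hw⟩ := exists_dotProduct_ne_zero hc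
  let pv : ZMod 11 × ZMod 11 → Fin 3 → K := fun z => w + e z.1 • a + e z.2 • b
  let dv : Option (ZMod 11) → Fin 3 → K := fun s => s.elim b fun s => a + e s • b
  let lv : Option (ZMod 11) → ZMod 11 → Fin 3 → K := fun s t =>
    s.elim (crossProduct b (w + e t • a)) fun s => crossProduct (a + e s • b) (w + e t • b)
  have hpl : ∀ z, pv z ⬝ᵥ crossProduct a b = w ⬝ᵥ crossProduct a b := fun z => by
    simp [pv, cross_apply, dotProduct, Fin.sum_univ_three]
    ring
  have hdl : ∀ s, dv s ⬝ᵥ crossProduct a b = 0 := fun s => by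
    cases s <;> simp [dv]
  have hdlv : ∀ s t, dv s ⬝ᵥ lv s t = 0 := fun s t => by
    cases s <;> exact dot_self_cross _ _
  have hplv : ∀ s t z, pv z ⬝ᵥ lv s t = 0 ↔ coord s z = t := fun s t z => by
    have key : pv z ⬝ᵥ lv s t = (w ⬝ᵥ crossProduct a b) * e (coord s z - t) ∨
        pv z ⬝ᵥ lv s t = (w ⬝ᵥ crossProduct a b) * e (t - coord s z) := by
      cases s with
      | none =>
        left
        simp [pv, lv, coord, cross_apply, dotProduct, Fin.sum_univ_three]
        ring
      | some s =>
        right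
        simp [pv, lv, coord, cross_apply, dotProduct, Fin.sum_univ_three]
        ring
    rcases key with h | h <;> rw [h, mul_eq_zero, or_iff_right hw, map_eq_zero_iff e e.injective,
      sub_eq_zero]
    exact eq_comm
  have hpv0 : ∀ z, pv z ≠ 0 := fun z =>
    (ne_zero_of_dotProduct_ne_zero (by rw [hpl]; exact hw)).1
  have hdv0 : ∀ s, dv s ≠ 0 := fun s => by
    cases s with
    | none => exact hb
    | some s =>
      refine (ne_zero_of_dotProduct_ne_zero (v := crossProduct b w) ?_).1
      convert hw using 1
      simp [dv, cross_apply, dotProduct, Fin.sum_univ_three]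
      ring
  have hlv0 : ∀ s t, lv s t ≠ 0 := fun s t => by
    obtain ⟨z, hz⟩ := AffineFrame.exists_coord_eq s (t + 1)
    refine (ne_zero_of_dotProduct_ne_zero (u := pv z) fun h => ?_).2
    rw [hplv, hz] at h
    simp at h
  refine ⟨⟨fun z => mk K _ (hpv0 z), fun s => mk K _ (hdv0 s), fun s t => mk K _ (hlv0 s t),
    fun z h => ?_, fun s => ?_, fun s t => ?_, fun s t z => ?_⟩, ?_, ?_, ?_⟩
  · rw [mem_iff, orthogonal_mk, hpl] at h
    exact hw h
  · rw [mem_iff, orthogonal_mk, hdl]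
  · rw [mem_iff, orthogonal_mk, hdlv]
  · rw [mem_iff, orthogonal_mk, hplv]
  · rfl
  · simp [dv]
  · simp [dv]

theorem order_eq_eleven [DecidableEq K] [Fintype K] (hK : Fintype.card K = 11) :
    order (ℙ K (Fin 3 → K)) (ℙ K (Fin 3 → K)) = 11 := by
  have := Fintype.ofFinite (ℙ K (Fin 3 → K))
  have h := card_points (ℙ K (Fin 3 → K)) (ℙ K (Fin 3 → K))
  rw [← Nat.card_eq_fintype_card, card_of_finrank K _ (Module.finrank_fin_fun K (n := 3)),
    Nat.card_eq_fintype_card, hK] at h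
  norm_num [Finset.sum_range_succ] at h
  nlinarith

end Coordinates

section Tangents

open Configuration ofField Projectivization Matrix
open scoped LinearAlgebra.Projectivization

theorem isProjLine_iff {L : Submodule F (Fin 3 → F)} :
    IsProjLine F L ↔ ∃ a ≠ 0, L = LinearMap.ker (dotProductEquiv F (Fin 3) a) := by
  have hker : ∀ f : Module.Dual F (Fin 3 → F), f ≠ 0 →
      Module.finrank F (LinearMap.ker f) = 2 := fun f hf => by
    have h := Module.Dual.finrank_ker_add_one_of_ne_zero hf
    rw [Module.finrank_fin_fun] at h
    omega
  constructor
  · intro hL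
    have hlt : L < ⊤ := lt_top_iff_ne_top.2 fun h => by
      rw [IsProjLine, h, finrank_top, Module.finrank_fin_fun] at hL
      omega
    obtain ⟨f, hf, hle⟩ := L.exists_le_ker_of_lt_top hlt
    obtain ⟨a, rfl⟩ := (dotProductEquiv F (Fin 3)).surjective f
    refine ⟨a, fun ha => hf (by rw [ha, map_zero]), ?_⟩
    exact Submodule.eq_of_le_of_finrank_eq hle (by rw [hker _ hf, hL])
  · rintro ⟨a, ha, rfl⟩
    exact hker _ (by simpa using ha)

theorem mem_pointsOn_ker {a : Fin 3 → F} (ha : a ≠ 0) (p : PGPoint F) :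
    p ∈ pointsOn (LinearMap.ker (dotProductEquiv F (Fin 3) a)) ↔ p ∈ mk F a ha := by
  induction p using Projectivization.ind with | h v hv =>
  rw [mem_iff, orthogonal_mk, pointsOn, Set.mem_ofPred_eq, submodule_mk,
    Submodule.span_singleton_le_iff_mem, LinearMap.mem_ker, dotProductEquiv_apply_apply,
    dotProduct_comm]

theorem noTangents_iff {S : Set (PGPoint F)} :
    NoTangents S ↔ ∀ l : PGPoint F, ¬ ∃! p : PGPoint F, p ∈ S ∧ p ∈ l := by
  constructor
  · intro h l
    induction l using Projectivization.ind with | h a ha =>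
    have := h _ (isProjLine_iff.2 ⟨a, ha, rfl⟩)
    simpa only [Set.mem_inter_iff, mem_pointsOn_ker ha] using this
  · intro h L hL
    obtain ⟨a, ha, rfl⟩ := isProjLine_iff.1 hL
    simpa only [Set.mem_inter_iff, mem_pointsOn_ker ha] using h (mk F a ha)

/-- Coordinates modulo 11 of the points of a set without tangents. -/
def noTangentsTriples : List (ℕ × ℕ × ℕ) :=
  [(1, 1, 0), (1, 5, 1), (1, 7, 2), (1, 9, 7), (1, 6, 6), (1, 1, 5), (1, 9, 9), (1, 5, 4),
    (1, 10, 8), (0, 1, 0), (1, 4, 0), (1, 7, 10), (1, 4, 8), (1, 10, 5), (0, 1, 6), (1, 6, 10),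
    (1, 7, 3), (1, 9, 1)]

/-- Whether the point `p` is on the line `a`. -/
def isIncident (a p : ℕ × ℕ × ℕ) : Bool :=
  Nat.beq ((p.1 * a.1 + p.2.1 * a.2.1 + p.2.2 * a.2.2) % 11) 0

theorem exists_isIncident_of_mem :
    ((List.range 11).all fun x => (List.range 11).all fun y => (List.range 11).all fun z =>
      Nat.beq (x + y + z) 0 || noTangentsTriples.all fun p => !(isIncident (x, y, z) p) ||
        noTangentsTriples.any fun p' => isIncident (x, y, z) p' && p' != p) = true := by
  decide +kernel

/-- Coordinate vectors of the points of a set without tangents. -/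
def noTangentsVector (i : Fin 18) : Fin 3 → ZMod 11 :=
  ![(noTangentsTriples.get i).1, (noTangentsTriples.get i).2.1, (noTangentsTriples.get i).2.2]

theorem noTangentsVector_ne_zero (i : Fin 18) : noTangentsVector i ≠ 0 := by
  revert i
  decide

theorem noTangentsVector_crossProduct (i j : Fin 18) (h : i ≠ j) :
    crossProduct (noTangentsVector i) (noTangentsVector j) ≠ 0 := by
  revert i j
  simp only [cross_apply]
  decide +kernel

theorem isIncident_iff (a : Fin 3 → ZMod 11) (i : Fin 18) :
    isIncident ((a 0).val, (a 1).val, (a 2).val) (noTangentsTriples.get i) = true ↔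
      noTangentsVector i ⬝ᵥ a = 0 := by
  rw [isIncident, Nat.beq_eq, ← Nat.dvd_iff_mod_eq_zero, ← ZMod.natCast_eq_zero_iff]
  push_cast
  simp only [ZMod.natCast_zmod_val]
  rw [dotProduct, Fin.sum_univ_three]
  rfl

theorem exists_ne_dotProduct_noTangentsVector (a : Fin 3 → ZMod 11) (ha : a ≠ 0) (i : Fin 18)
    (hi : noTangentsVector i ⬝ᵥ a = 0) : ∃ j ≠ i, noTangentsVector j ⬝ᵥ a = 0 := by
  have hr : ∀ k, (a k).val ∈ List.range 11 := fun k => List.mem_range.2 (ZMod.val_lt _)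
  have key := List.all_eq_true.1 (List.all_eq_true.1 (List.all_eq_true.1
    exists_isIncident_of_mem _ (hr 0)) _ (hr 1)) _ (hr 2)
  rw [Bool.or_eq_true, Nat.beq_eq] at key
  rcases key with key | key
  · refine absurd (funext fun k => (ZMod.val_eq_zero _).1 ?_) ha
    fin_cases k <;> dsimp only [Fin.zero_eta, Fin.mk_one, Fin.reduceFinMk] <;> omega
  · have key := List.all_eq_true.1 key _ (List.get_mem noTangentsTriples i)
    rw [(isIncident_iff a i).2 hi, Bool.not_true, Bool.false_or, List.any_eq_true] at key
    obtain ⟨p, hp, key⟩ := key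
    obtain ⟨j, rfl⟩ := List.mem_iff_get.1 hp
    rw [Bool.and_eq_true] at key
    refine ⟨j, ?_, (isIncident_iff a j).1 key.1⟩
    rintro rfl
    simp at key

theorem exists_noTangents_ncard_eq_eighteen (e : ZMod 11 ≃+* F) :
    ∃ S : Set (PGPoint F), NoTangents S ∧ S.ncard = 18 := by
  have hne : ∀ i, e ∘ noTangentsVector i ≠ 0 := fun i h => noTangentsVector_ne_zero i <| by
    ext j
    exact (map_eq_zero_iff e e.injective).1 (congrFun h j)
  have hinj : Function.Injective fun i => mk F _ (hne i) := by
    intro i j h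
    by_contra hij
    refine noTangentsVector_crossProduct i j hij ?_
    rw [mk_eq_mk_iff_crossProduct_eq_zero] at h
    ext k
    have := congrFun h k
    rw [cross_apply] at this ⊢
    fin_cases k <;>
      simpa [← map_mul, ← map_sub, map_eq_zero_iff e e.injective] using this
  refine ⟨Set.range fun i => mk F _ (hne i), noTangents_iff.2 fun l => ?_, ?_⟩
  · rintro ⟨p, ⟨⟨i, rfl⟩, hi⟩, huniq⟩
    induction l using Projectivization.ind with | h a ha =>
    have hdot : ∀ i, mk F _ (hne i) ∈ mk F a ha ↔ noTangentsVector i ⬝ᵥ (e.symm ∘ a) = 0 := by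
      intro i
      rw [mem_iff, orthogonal_mk, ← map_eq_zero_iff e e.injective]
      simp [dotProduct]
    have ha' : e.symm ∘ a ≠ 0 := fun h => ha <| by
      ext j
      exact (map_eq_zero_iff e.symm e.symm.injective).1 (congrFun h j)
    obtain ⟨j, hji, hj⟩ := exists_ne_dotProduct_noTangentsVector _ ha' i ((hdot i).1 hi)
    exact hji (hinj (huniq _ ⟨⟨j, rfl⟩, (hdot j).2 hj⟩))
  · rw [← Set.image_univ, Set.ncard_image_of_injective _ hinj, Set.ncard_univ,
      Nat.card_eq_fintype_card, Fintype.card_fin]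

open scoped Classical in
theorem eighteen_le_ncard (e : ZMod 11 ≃+* F) {S : Set (PGPoint F)} (hne : S.Nonempty)
    (hS : NoTangents S) : 18 ≤ S.ncard := by
  have := Fintype.ofEquiv _ e.toEquiv
  have := Fintype.ofFinite (PGPoint F)
  have ho := order_eq_eleven (K := F) (by rw [← Fintype.card_congr e.toEquiv, ZMod.card])
  have hsec : ∀ l : PGPoint F, ProjectivePlaneCounting.secant S.toFinset l ≠ 1 := fun l h => by
    obtain ⟨p, hp⟩ := Finset.card_eq_one.1 h
    have hp' : ∀ x, x ∈ S ∧ x ∈ l ↔ x = p := fun x => by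
      rw [← Finset.mem_singleton, ← hp, Finset.mem_filter, Set.mem_toFinset]
    exact noTangents_iff.1 hS l ⟨p, (hp' p).2 rfl, fun x => (hp' x).1⟩
  rw [Set.ncard_eq_toFinset_card']
  have h1 := ProjectivePlaneCounting.sixteen_le_card hsec ho (Set.toFinset_nonempty.2 hne)
  have h2 := card_ne_sixteen ho hsec (exists_affineFrame e)
  have h3 := card_ne_seventeen ho hsec (exists_affineFrame e)
  omega

end Tangents

/-- the smallest non-empty set without tangents in `PG(2,11)` has
exactly 18 points. -/
theorem stmt_19 [Fintype F] (hcard : Fintype.card F = 11) :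
    (∃ S : Set (PGPoint F), NoTangents S ∧ S.ncard = 18) ∧
      ∀ S : Set (PGPoint F), S.Nonempty → NoTangents S → 18 ≤ S.ncard := by
  have e := ZMod.ringEquivOfPrime F (by norm_num) hcard
  exact ⟨exists_noTangents_ncard_eq_eighteen e, fun S hne hS => eighteen_le_ncard e hne hS⟩
end
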